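/- arXiv:2401.09649 — 8 statements merged into one kernel-verified Lean document; each statement's English description precedes it below -/
import Mathlib

section
/- Let X be an infinite subset of ℕ, and let B(X) = {Y ⊆ ℕ : Y cofinally bisects X}, viewed as a subset of the Cantor space 2^ℕ. Then the complement 2^ℕ \ B(X) belongs to the σ-ideal ℰ; that is, 2^ℕ \ B(X) is contained in a countable union of closed measure-zero subsets of 2^ℕ. -/
open MeasureTheory Filter Set

/-- `cnt X n` is the number of elements of `X` below `n`, i.e. `|X ∩ {0,…,n−1}|`. -/
noncomputable def cnt (X : Set ℕ) (n : ℕ) : ℕ := Nat.card ↥(X ∩ Set.Iio n)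

/-- `S` cofinally bisects `X`: for infinitely many `n`,
`|S ∩ X ∩ {0,…,n−1}| / |X ∩ {0,…,n−1}| = 1/2`. -/
def CofBisects (S X : Set ℕ) : Prop :=
  {n : ℕ | (cnt (S ∩ X) n : ℝ) / (cnt X n : ℝ) = 1 / 2}.Infinite

/-- Identify an element of Cantor space `2^ℕ` with a subset of `ℕ`. -/
def toSet (Y : ℕ → Bool) : Set ℕ := {i | Y i = true}

/-- `μ` is the uniform (1/2,1/2) product probability measure on Cantor space:
every basic cylinder determined by finitely many coordinates `s` has measure `(1/2)^|s|`. -/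
def IsCantorMeasure (μ : Measure (ℕ → Bool)) : Prop :=
  ∀ s : Finset ℕ, ∀ g : ℕ → Bool,
    μ {Y : ℕ → Bool | ∀ i ∈ s, Y i = g i} = (1 / 2 : ENNReal) ^ s.card

/-- Membership in the σ-ideal `ℰ` generated by closed measure-zero subsets of `2^ℕ`:
`A` is covered by countably many closed `μ`-null sets. -/
def MemE (μ : Measure (ℕ → Bool)) (A : Set (ℕ → Bool)) : Prop :=
  ∃ F : ℕ → Set (ℕ → Bool), (∀ n, IsClosed (F n) ∧ μ (F n) = 0) ∧ A ⊆ ⋃ n, F n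

open Classical in
lemma cnt_succ (A : Set ℕ) (n : ℕ) : cnt A (n+1) = cnt A n + if n ∈ A then 1 else 0 := by
  have h : ∀ m, cnt A m = Nat.count (· ∈ A) m := by
    intro m
    rw [Nat.count_eq_card_filter_range, cnt, Nat.card_coe_set_eq, ← Set.ncard_coe_finset]
    congr 1
    ext i
    simp [and_comm]
  rw [h, h, Nat.count_succ]

lemma cnt_zero' (A : Set ℕ) : cnt A 0 = 0 := by
  simp [cnt]

/-- the walk -/
noncomputable def wD (X : Set ℕ) (n : ℕ) (Y : ℕ → Bool) : ℤ :=
  2 * (cnt (toSet Y ∩ X) n : ℤ) - cnt X n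

open Classical in
lemma wD_succ (X : Set ℕ) (n : ℕ) (Y : ℕ → Bool) :
    wD X (n+1) Y = wD X n Y + if n ∈ X then (if Y n = true then 1 else -1) else 0 := by
  unfold wD
  rw [cnt_succ, cnt_succ]
  by_cases h : n ∈ X <;> by_cases h' : Y n = true <;> simp [h, h', toSet] <;> ring

lemma wD_congr (X : Set ℕ) (n : ℕ) (Y Z : ℕ → Bool) (h : ∀ i < n, Y i = Z i) :
    wD X n Y = wD X n Z := by
  induction n with
  | zero => simp [wD, cnt_zero']
  | succ n ih =>
    rw [wD_succ, wD_succ, ih (fun i hi => h i (by omega)), h n (by omega)]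

lemma wD_cont (X : Set ℕ) (n : ℕ) : Continuous (wD X n) := by
  induction n with
  | zero =>
    have : wD X 0 = fun _ => 0 := by funext Y; simp [wD, cnt_zero']
    rw [this]; exact continuous_const
  | succ n ih =>
    classical
    let φ : Bool → ℤ := fun b => if n ∈ X then (if b = true then 1 else -1) else 0
    have hφ : Continuous φ := continuous_of_discreteTopology
    have : wD X (n+1) = fun Y => wD X n Y + φ (Y n) := by
      funext Y; exact wD_succ X n Y
    rw [this]
    exact ih.add (hφ.comp (continuous_apply n))

/-- survival probabilities -/
noncomputable def uS : ℕ → ℤ → ℝ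
  | 0, z => if z = 0 then 0 else 1
  | k+1, z => if z = 0 then 0 else (uS k (z-1) + uS k (z+1)) / 2

lemma uS_zero (k : ℕ) : uS k 0 = 0 := by cases k <;> simp [uS]

lemma uS_succ (k : ℕ) (z : ℤ) (hz : z ≠ 0) :
    uS (k+1) z = (uS k (z-1) + uS k (z+1)) / 2 := by simp [uS, hz]

lemma uS_bd (k : ℕ) : ∀ z, 0 ≤ uS k z ∧ uS k z ≤ 1 := by
  induction k with
  | zero => intro z; by_cases h : z = 0 <;> simp [uS, h]
  | succ k ih =>
    intro z
    by_cases h : z = 0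
    · simp [uS, h]
    · rw [uS_succ k z h]
      have h1 := ih (z-1)
      have h2 := ih (z+1)
      constructor <;> linarith

lemma uS_anti (k : ℕ) : ∀ z, uS (k+1) z ≤ uS k z := by
  induction k with
  | zero =>
    intro z
    by_cases h : z = 0
    · simp [h, uS_zero]
    · have := (uS_bd 1 z).2
      simpa [uS, h] using this
  | succ k ih =>
    intro z
    by_cases h : z = 0
    · simp [h, uS_zero]
    · rw [uS_succ _ z h, uS_succ _ z h]
      have h1 := ih (z-1)
      have h2 := ih (z+1)
      linarith

lemma harm_zero (f : ℕ → ℝ) (h0 : f 0 = 0) (hh : ∀ s, f (s+1) = (f s + f (s+2)) / 2)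
    (hn : ∀ s, 0 ≤ f s) (hb : ∀ s, f s ≤ 1) (s : ℕ) : f s = 0 := by
  have key : ∀ s : ℕ, f s = s * f 1 ∧ f (s+1) = (s+1) * f 1 := by
    intro s
    induction s with
    | zero => simp [h0]
    | succ s ih =>
      obtain ⟨a, b⟩ := ih
      have := hh s
      push_cast
      refine ⟨b, ?_⟩
      have h2 : f (s+1+1) = 2 * f (s+1) - f s := by
        show f (s+2) = _
        linarith
      rw [h2, a, b]; ring
  have h1 : f 1 = 0 := by
    by_contra hne
    have hp : 0 < f 1 := lt_of_le_of_ne (hn 1) (Ne.symm hne)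
    obtain ⟨n, hn'⟩ := exists_nat_gt (1 / f 1)
    rw [div_lt_iff₀ hp] at hn'
    have := hb n
    rw [(key n).1] at this
    linarith
  rw [(key s).1, h1, mul_zero]

lemma uS_tendsto (z : ℤ) : Tendsto (fun k => uS k z) atTop (nhds 0) := by
  have hex : ∀ z, ∃ l, Tendsto (fun k => uS k z) atTop (nhds l) := by
    intro z
    refine ⟨_, tendsto_atTop_ciInf (antitone_nat_of_succ_le fun k => uS_anti k z) ?_⟩
    refine ⟨0, ?_⟩
    rintro _ ⟨k, rfl⟩
    exact (uS_bd k z).1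
  choose U hU using hex
  have U0 : U 0 = 0 := by
    refine tendsto_nhds_unique (hU 0) ?_
    simp [uS_zero]
  have Un : ∀ z, 0 ≤ U z := fun z => ge_of_tendsto' (hU z) fun k => (uS_bd k z).1
  have Ub : ∀ z, U z ≤ 1 := fun z => le_of_tendsto' (hU z) fun k => (uS_bd k z).2
  have Uh : ∀ z, z ≠ 0 → U z = (U (z-1) + U (z+1)) / 2 := by
    intro z hz
    refine tendsto_nhds_unique ((tendsto_add_atTop_iff_nat 1).2 (hU z)) ?_
    simp only [uS_succ _ z hz]
    exact ((hU _).add (hU _)).div_const 2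
  have hz : U z = 0 := by
    obtain ⟨n, rfl | rfl⟩ := z.eq_nat_or_neg
    · refine harm_zero (fun s => U (s:ℤ)) (by simpa using U0) ?_ (fun s => Un _) (fun s => Ub _) n
      intro s
      have := Uh ((s:ℤ)+1) (by omega)
      rw [show (s:ℤ)+1-1 = s by ring, show (s:ℤ)+1+1 = s+2 by ring] at this
      simpa using this
    · refine harm_zero (fun s => U (-(s:ℤ))) (by simpa using U0) ?_
        (fun s => Un _) (fun s => Ub _) n
      intro s
      have := Uh (-((s:ℤ)+1)) (by omega)
      rw [show -((s:ℤ)+1)-1 = -(s+2) by ring, show -((s:ℤ)+1)+1 = -s by ring] at this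
      simp only [Nat.cast_add, Nat.cast_one, Nat.cast_ofNat]
      linarith
  rw [← hz]; exact hU z

/-- non-returning set in a cylinder -/
def cylN (X : Set ℕ) (m : ℕ) (g : ℕ → Bool) : Set (ℕ → Bool) :=
  {Y | (∀ i < m, Y i = g i) ∧ ∀ n ≥ m, wD X n Y ≠ 0}

lemma cylN_split (X : Set ℕ) (m : ℕ) (g : ℕ → Bool) :
    cylN X m g ⊆ cylN X (m+1) (Function.update g m true) ∪
      cylN X (m+1) (Function.update g m false) := by
  rintro Y ⟨h1, h2⟩
  have h3 : ∀ i < m+1, Y i = Function.update g m (Y m) i := by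
    intro i hi
    by_cases h : i = m
    · subst h; simp
    · rw [Function.update_of_ne h]; exact h1 i (by omega)
  have h4 : ∀ n ≥ m+1, wD X n Y ≠ 0 := fun n hn => h2 n (by omega)
  cases hb : Y m
  · right; rw [hb] at h3; exact ⟨h3, h4⟩
  · left; rw [hb] at h3; exact ⟨h3, h4⟩

lemma cylN_le (μ : Measure (ℕ → Bool)) (hμ : IsCantorMeasure μ)
    (X : Set ℕ) (hX : X.Infinite) (k : ℕ) : ∀ (m : ℕ) (g : ℕ → Bool),
    μ (cylN X m g) ≤ ENNReal.ofReal ((1/2)^m * uS k (wD X m g)) := by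
  have hemp : ∀ m g, wD X m g = 0 → cylN X m g = ∅ := by
    intro m g h
    ext Y
    simp only [cylN, mem_setOf_eq, mem_empty_iff_false, iff_false]
    rintro ⟨h1, h2⟩
    exact h2 m le_rfl ((wD_congr X m Y g h1).trans h)
  have hup : ∀ m g b, wD X m (Function.update g m b) = wD X m g := by
    intro m g b
    refine wD_congr X m _ _ fun i hi => ?_
    rw [Function.update_of_ne (by omega)]
  have hsum : ∀ m g a b c, μ (cylN X (m+1) (Function.update g m true)) ≤
      ENNReal.ofReal ((1/2)^(m+1) * a) → μ (cylN X (m+1) (Function.update g m false)) ≤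
      ENNReal.ofReal ((1/2)^(m+1) * b) → 0 ≤ a → 0 ≤ b → c = (b + a)/2 → 
      μ (cylN X m g) ≤ ENNReal.ofReal ((1/2)^m * c) := by
    intro m g a b c h1 h2 ha hb hc
    refine (measure_mono (cylN_split X m g)).trans ((measure_union_le _ _).trans
      ((add_le_add h1 h2).trans ?_))
    rw [← ENNReal.ofReal_add (by positivity) (by positivity)]
    refine ENNReal.ofReal_le_ofReal (le_of_eq ?_)
    rw [hc]; ring
  induction k with
  | zero =>
    intro m g
    by_cases h : wD X m g = 0
    · simp [hemp m g h]
    · have h1 := hμ (Finset.range m) g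
      rw [Finset.card_range] at h1
      have h2 : ENNReal.ofReal ((1/2)^m * uS 0 (wD X m g)) = (1/2)^m := by
        simp only [uS, h, if_false, mul_one]
        rw [ENNReal.ofReal_pow (by norm_num)]
        congr 1
        rw [ENNReal.ofReal_div_of_pos (by norm_num)]
        simp
      rw [h2, ← h1]
      refine measure_mono ?_
      rintro Y ⟨h1, -⟩ i hi
      exact h1 i (Finset.mem_range.1 hi)
  | succ k ih =>
    have inner : ∀ d m g, m + d ∈ X →
        μ (cylN X m g) ≤ ENNReal.ofReal ((1/2)^m * uS (k+1) (wD X m g)) := by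
      intro d
      induction d with
      | zero =>
        intro m g hm
        by_cases h : wD X m g = 0
        · simp [hemp m g h]
        have h1 := ih (m+1) (Function.update g m true)
        have h2 := ih (m+1) (Function.update g m false)
        refine hsum m g _ _ _ h1 h2 (uS_bd _ _).1 (uS_bd _ _).1 ?_
        rw [uS_succ _ _ h, wD_succ, wD_succ, hup, hup]
        have hm' : m ∈ X := by simpa using hm
        simp [hm', sub_eq_add_neg]
      | succ d ihd =>
        intro m g hm
        by_cases hmX : m ∈ X
        · by_cases h : wD X m g = 0
          · simp [hemp m g h]
          have h1 := ih (m+1) (Function.update g m true)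
          have h2 := ih (m+1) (Function.update g m false)
          refine hsum m g _ _ _ h1 h2 (uS_bd _ _).1 (uS_bd _ _).1 ?_
          rw [uS_succ _ _ h, wD_succ, wD_succ, hup, hup]
          simp [hmX, sub_eq_add_neg]
        · have hm' : m + 1 + d ∈ X := by rwa [show m+1+d = m+(d+1) by ring]
          have h1 := ihd (m+1) (Function.update g m true) hm'
          have h2 := ihd (m+1) (Function.update g m false) hm'
          refine hsum m g _ _ _ h1 h2 (uS_bd _ _).1 (uS_bd _ _).1 ?_
          rw [wD_succ, wD_succ, hup, hup]
          simp [hmX]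
    intro m g
    obtain ⟨x, hx, hmx⟩ := hX.exists_gt m
    exact inner (x - m) m g (by rwa [Nat.add_sub_cancel' hmx.le])

lemma cylN_null (μ : Measure (ℕ → Bool)) (hμ : IsCantorMeasure μ)
    (X : Set ℕ) (hX : X.Infinite) (m : ℕ) (g : ℕ → Bool) : μ (cylN X m g) = 0 := by
  have h := ((uS_tendsto (wD X m g)).const_mul ((1/2 : ℝ)^m))
  have h' := ENNReal.tendsto_ofReal h
  rw [mul_zero, ENNReal.ofReal_zero] at h'
  exact le_antisymm (ge_of_tendsto' h' fun k => cylN_le μ hμ X hX k m g) bot_le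

/-- For infinite `X ⊆ ℕ`, the complement of
`B(X) = {Y ∈ 2^ℕ : Y cofinally bisects X}` belongs to `ℰ`. -/
theorem complement_of_cofinally_bisecting_set_mem_E
    (μ : Measure (ℕ → Bool)) (hμ : IsCantorMeasure μ)
    (X : Set ℕ) (hX : X.Infinite) :
    MemE μ ({Y : ℕ → Bool | CofBisects (toSet Y) X}ᶜ) := by
  refine ⟨fun N => {Y | ∀ n ≥ N, wD X n Y ≠ 0}, fun N => ⟨?_, ?_⟩, ?_⟩
  · simp only [setOf_forall]
    refine isClosed_iInter fun n => isClosed_iInter fun _ => ?_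
    exact (isClosed_discrete ({0}ᶜ : Set ℤ)).preimage (wD_cont X n)
  · refine measure_mono_null (t := ⋃ t : Finset ℕ, cylN X N (fun i => decide (i ∈ t))) ?_
      (measure_iUnion_null fun t => cylN_null μ hμ X hX N _)
    intro Y hY
    refine mem_iUnion.2 ⟨(Finset.range N).filter (fun i => Y i = true), ?_, hY⟩
    intro i hi
    simp [hi]
  · intro Y hY
    have hfin : {n : ℕ | (cnt (toSet Y ∩ X) n : ℝ) / (cnt X n : ℝ) = 1 / 2}.Finite :=
      not_infinite.1 hY
    obtain ⟨B, hB⟩ := hfin.bddAbove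
    obtain ⟨x, hx, hBx⟩ := hX.exists_gt B
    refine mem_iUnion.2 ⟨x+1, ?_⟩
    intro n hn h0
    have hpos : 0 < cnt X n := by
      rw [cnt]
      have : Finite ↥(X ∩ Set.Iio n) := ((finite_Iio n).subset inter_subset_right).to_subtype
      have : Nonempty ↥(X ∩ Set.Iio n) := ⟨⟨x, hx, by simp; omega⟩⟩
      exact Nat.card_pos
    have hmem : n ≤ B := by
      refine hB ?_
      have hp : (0:ℝ) < cnt X n := by exact_mod_cast hpos
      have h1 : (2 * (cnt (toSet Y ∩ X) n : ℝ) - cnt X n) = 0 := by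
        unfold wD at h0
        exact_mod_cast h0
      show (cnt (toSet Y ∩ X) n : ℝ) / (cnt X n : ℝ) = 1 / 2
      rw [div_eq_div_iff hp.ne' (by norm_num)]
      linarith
    omega
end

section
/- 𝔰_{1/2}^∞ ≤ non(ℰ): every subset of 2^ℕ that does not belong to the σ-ideal ℰ is, when viewed as a family of subsets of ℕ, a cofinally bisecting family; hence the least cardinality of a cofinally bisecting family is at most the least cardinality of a subset of 2^ℕ not in ℰ. -/
open MeasureTheory Filter Set

/-- `𝔰_{1/2}^∞`: the least cardinality of a cofinally bisecting family
of infinite subsets of `ℕ`. -/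
noncomputable def sHalfInf : Cardinal :=
  sInf {c : Cardinal | ∃ 𝒮 : Set (Set ℕ), (∀ S ∈ 𝒮, S.Infinite) ∧
    (∀ X : Set ℕ, X.Infinite → ∃ S ∈ 𝒮, CofBisects S X) ∧ c = Cardinal.mk 𝒮}

/-- `non(ℰ)`: the least cardinality of a subset of `2^ℕ` not in `ℰ`. -/
noncomputable def nonE (μ : Measure (ℕ → Bool)) : Cardinal :=
  sInf {c : Cardinal | ∃ S : Set (ℕ → Bool), ¬ MemE μ S ∧ c = Cardinal.mk S}

open ProbabilityTheory Topology

noncomputable def coinM : Measure Bool :=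
  (1 / 2 : ENNReal) • Measure.dirac true + (1 / 2 : ENNReal) • Measure.dirac false

lemma coinM_singleton (b : Bool) : coinM {b} = 1 / 2 := by
  cases b <;> simp [coinM]

lemma coinM_univ : coinM univ = 1 := by
  simp [coinM, ENNReal.inv_two_add_inv_two]

instance coinM_prob : IsProbabilityMeasure coinM := ⟨coinM_univ⟩

lemma cantor_eq (μ : Measure (ℕ → Bool)) (hμ : IsCantorMeasure μ) :
    μ = Measure.infinitePi (fun _ : ℕ => coinM) := by
  classical
  apply Measure.eq_infinitePi
  intro s t _
  by_cases he : ∃ i ∈ s, t i = ∅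
  · obtain ⟨i, hi, hti⟩ := he
    rw [Finset.prod_eq_zero hi (by simp [hti])]
    have : Set.pi (s : Set ℕ) t = ∅ := Set.pi_eq_empty (i := i) (by simpa using hi) hti
    simp [this]
  · push Not at he
    have : ∀ i, ∃ b, i ∈ s → b ∈ t i := by
      intro i
      by_cases hi : i ∈ s
      · obtain ⟨b, hb⟩ := he i hi
        exact ⟨b, fun _ => hb⟩
      · exact ⟨true, fun h => absurd h hi⟩
    choose g hg using this
    have hsing : ∀ i ∈ s, t i ≠ univ → t i = {g i} := by
      intro i hi hne
      have h1 := hg i hi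
      have h2 : (!g i) ∉ t i := by
        intro h2
        apply hne
        ext b
        cases hb : b <;> cases hgi : g i <;> simp_all
      ext b
      cases hb : b <;> cases hgi : g i <;> simp_all
    have hpi : Set.pi (s : Set ℕ) t = {Y | ∀ i ∈ s.filter (fun i => t i ≠ univ), Y i = g i} := by
      ext Y
      simp only [Set.mem_pi, Finset.mem_coe, Set.mem_setOf_eq, Finset.mem_filter]
      constructor
      · rintro h i ⟨hi, hne⟩
        have := h i hi
        rw [hsing i hi hne] at this
        exact this
      · intro h i hi
        by_cases hne : t i = univ
        · rw [hne]; trivial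
        · rw [h i ⟨hi, hne⟩]; exact hg i hi
    rw [hpi, hμ]
    have hprod : ∀ i ∈ s, coinM (t i) = if t i ≠ univ then (1 / 2 : ENNReal) else 1 := by
      intro i hi
      split_ifs with h
      · rw [hsing i hi h, coinM_singleton]
      · rw [not_not.1 h, coinM_univ]
    rw [Finset.prod_congr rfl hprod, Finset.prod_ite]
    simp

open Classical in
noncomputable def stepZ (X : Set ℕ) (i : ℕ) (b : Bool) : ℤ :=
  if i ∈ X then (if b then 1 else -1) else 0

lemma stepZ_abs (X : Set ℕ) (i : ℕ) (b : Bool) : |stepZ X i b| ≤ 1 := by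
  unfold stepZ; split_ifs <;> simp

lemma ae_zero (μ : Measure (ℕ → Bool)) (hμ : IsCantorMeasure μ) (X : Set ℕ) (hX : X.Infinite) :
    ∀ᵐ Y ∂μ, ∀ N, ∃ n ≥ N, ∑ i ∈ Finset.range (n + 1), stepZ X i (Y i) = 0 := by
  have hμe := cantor_eq μ hμ
  have hprob : IsProbabilityMeasure μ := by rw [hμe]; infer_instance
  let φ : ℕ → Bool → ℝ := fun i b => (stepZ X i b : ℝ)
  have hφm : ∀ i, Measurable (φ i) := fun i => measurable_of_finite _
  let ξ : ℕ → (ℕ → Bool) → ℝ := fun i Y => φ i (Y i)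
  have hξm : ∀ i, Measurable (ξ i) := fun i => (hφm i).comp (measurable_pi_apply i)
  have hξs : ∀ i, StronglyMeasurable (ξ i) := fun i => (hξm i).stronglyMeasurable
  have hind : iIndepFun ξ μ := by
    rw [hμe]; exact iIndepFun_infinitePi (X := φ) hφm
  have hξb : ∀ i Y, |ξ i Y| ≤ 1 := fun i Y => by
    have := stepZ_abs X i (Y i)
    simp only [ξ, φ]; exact_mod_cast this
  have hξint : ∀ i, Integrable (ξ i) μ := fun i =>
    Integrable.of_bound (hξs i).aestronglyMeasurable 1 (ae_of_all _ (hξb i))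
  have hmean : ∀ i, ∫ Y, ξ i Y ∂μ = 0 := by
    intro i
    have hmap : μ.map (fun Y => Y i) = coinM := by
      rw [hμe]; exact Measure.infinitePi_map_eval _ i
    have : ∫ Y, ξ i Y ∂μ = ∫ b, φ i b ∂coinM := by
      rw [← hmap, integral_map (measurable_pi_apply i).aemeasurable
        (hφm i).aestronglyMeasurable]
    rw [this, integral_fintype Integrable.of_finite]
    simp only [Fintype.univ_bool, Finset.mem_singleton, Bool.true_eq_false, not_false_eq_true, Finset.sum_insert, Finset.sum_singleton, Measure.real, coinM_singleton, φ, stepZ]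
    split_ifs <;> simp_all
  let W : ℕ → (ℕ → Bool) → ℝ := fun n => ∑ i ∈ Finset.range (n + 1), ξ i
  have hWs : ∀ n, W (n + 1) - W n = ξ (n + 1) := fun n => by
    simp only [W]; rw [Finset.sum_range_succ _ (n + 1)]; simp
  have hmart : Martingale W (Filtration.natural ξ hξs) μ := by
    apply martingale_of_condExp_sub_eq_zero_nat
    · intro n
      refine Finset.stronglyMeasurable_sum _ fun i hi => ?_
      exact (Filtration.stronglyAdapted_natural hξs i).mono
        ((Filtration.natural ξ hξs).mono (Nat.lt_succ_iff.1 (Finset.mem_range.1 hi)))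
    · intro n
      exact integrable_finset_sum' _ fun i _ => hξint i
    · intro n
      rw [hWs]
      refine (hind.condExp_natural_ae_eq_of_lt hξs (Nat.lt_succ_self n)).trans ?_
      rw [hmean]; rfl
  have hbd : ∀ᵐ Y ∂μ, ∀ i, |W (i + 1) Y - W i Y| ≤ ((1 : NNReal) : ℝ) := by
    refine ae_of_all _ fun Y i => ?_
    have := congrFun (hWs i) Y
    simp only [Pi.sub_apply] at this
    rw [this]; simpa using hξb (i + 1) Y
  filter_upwards [hmart.submartingale.bddAbove_iff_exists_tendsto hbd,
    hmart.bddAbove_range_iff_bddBelow_range hbd] with Y h1 h2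
  have hnot : ¬ ∃ c, Tendsto (fun n => W n Y) atTop (𝓝 c) := by
    rintro ⟨c, hc⟩
    have h3 : Tendsto (fun n => W (n + 1) Y - W n Y) atTop (𝓝 (c - c)) :=
      ((tendsto_add_atTop_iff_nat 1).2 hc).sub hc
    rw [sub_self] at h3
    have h4 := (h3.abs).eventually (gt_mem_nhds (show |(0 : ℝ)| < 1 by simp))
    obtain ⟨N, hN⟩ := eventually_atTop.1 h4
    obtain ⟨m, hm, hmN⟩ := hX.exists_gt N
    obtain ⟨k, rfl⟩ : ∃ k, m = k + 1 := ⟨m - 1, by omega⟩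
    have h5 := hN k (by omega)
    have := congrFun (hWs k) Y
    simp only [Pi.sub_apply] at this
    rw [this] at h5
    simp only [ξ, φ, stepZ, hm, if_true] at h5
    split_ifs at h5 <;> simp at h5
  have hA : ¬ BddAbove (Set.range fun n => W n Y) := fun h => hnot (h1.1 h)
  have hB : ¬ BddBelow (Set.range fun n => W n Y) := fun h => hA (h2.2 h)
  set w : ℕ → ℤ := fun n => ∑ i ∈ Finset.range (n + 1), stepZ X i (Y i) with hw
  have hWw : ∀ n, W n Y = w n := fun n => by simp [W, w, ξ, φ]
  have hws : ∀ n, |w (n + 1) - w n| ≤ 1 := fun n => by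
    have : w (n + 1) - w n = stepZ X (n + 1) (Y (n + 1)) := by
      simp only [w]; rw [Finset.sum_range_succ _ (n + 1)]; ring
    rw [this]; exact stepZ_abs _ _ _
  intro N
  by_contra hcon
  push Not at hcon
  have hcon' : ∀ n ≥ N, w n ≠ 0 := hcon
  rcases lt_or_gt_of_ne (hcon' N le_rfl) with h | h
  · have : ∀ n ≥ N, w n < 0 := by
      intro n hn
      induction n, hn using Nat.le_induction with
      | base => exact h
      | succ n hn ih =>
        have := hcon' (n + 1) (by omega)
        have := abs_le.1 (hws n)
        omega
    apply hA
    apply Filter.IsBoundedUnder.bddAbove_range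
    refine ⟨0, ?_⟩
    rw [eventually_map]
    filter_upwards [eventually_ge_atTop N] with n hn
    rw [hWw]; exact_mod_cast (this n hn).le
  · have : ∀ n ≥ N, 0 < w n := by
      intro n hn
      induction n, hn using Nat.le_induction with
      | base => exact h
      | succ n hn ih =>
        have := hcon' (n + 1) (by omega)
        have := abs_le.1 (hws n)
        omega
    apply hB
    apply Filter.IsBoundedUnder.bddBelow_range
    refine ⟨0, ?_⟩
    rw [eventually_map]
    filter_upwards [eventually_ge_atTop N] with n hn
    rw [hWw]; exact_mod_cast (this n hn).le

open Classical in
lemma cnt_eq_card (X : Set ℕ) (n : ℕ) :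
    cnt X n = ((Finset.range n).filter (· ∈ X)).card := by
  unfold cnt
  rw [Nat.card_coe_set_eq, ← Set.ncard_coe_finset]
  congr 1
  ext i
  simp [and_comm]

lemma cnt_eq_sum (X : Set ℕ) (Y : ℕ → Bool) (n : ℕ) :
    ∑ i ∈ Finset.range n, stepZ X i (Y i) = 2 * (cnt (toSet Y ∩ X) n : ℤ) - cnt X n := by
  classical
  rw [cnt_eq_card, cnt_eq_card, Finset.card_filter, Finset.card_filter]
  push_cast
  rw [Finset.mul_sum, ← Finset.sum_sub_distrib]
  refine Finset.sum_congr rfl fun i _ => ?_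
  by_cases h : i ∈ X <;> by_cases h' : Y i = true <;> simp [stepZ, toSet, h, h']

lemma cnt_pos {X : Set ℕ} {n a : ℕ} (ha : a ∈ X) (h : a < n) : 0 < cnt X n := by
  classical
  rw [cnt_eq_card]
  exact Finset.card_pos.2 ⟨a, by simp [ha, h]⟩

lemma bis_iff {X : Set ℕ} (Y : ℕ → Bool) {n : ℕ} (h : 0 < cnt X n) :
    (cnt (toSet Y ∩ X) n : ℝ) / (cnt X n : ℝ) = 1 / 2 ↔
      ∑ i ∈ Finset.range n, stepZ X i (Y i) = 0 := by
  rw [cnt_eq_sum]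
  have h' : (cnt X n : ℝ) ≠ 0 := by exact_mod_cast h.ne'
  rw [div_eq_div_iff h' two_ne_zero, sub_eq_zero]
  constructor
  · intro e
    have : cnt (toSet Y ∩ X) n * 2 = 1 * cnt X n := by exact_mod_cast e
    omega
  · intro e
    have : cnt (toSet Y ∩ X) n * 2 = 1 * cnt X n := by omega
    exact_mod_cast this

lemma main1 (μ : Measure (ℕ → Bool)) (hμ : IsCantorMeasure μ) (S : Set (ℕ → Bool))
    (hS : ¬ MemE μ S) (X : Set ℕ) (hX : X.Infinite) : ∃ Y ∈ S, CofBisects (toSet Y) X := by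
  by_contra hcon
  push Not at hcon
  apply hS
  obtain ⟨a, ha⟩ := hX.nonempty
  refine ⟨fun m => {Y | ∀ n ≥ m, ∑ i ∈ Finset.range (n + 1), stepZ X i (Y i) ≠ 0}, ?_, ?_⟩
  · intro m
    constructor
    · simp only [Set.setOf_forall]
      refine isClosed_iInter fun n => isClosed_iInter fun _ => ?_
      have hc : Continuous fun Y : ℕ → Bool =>
          ∑ i ∈ Finset.range (n + 1), stepZ X i (Y i) :=
        continuous_finset_sum _ fun i _ =>
          (continuous_of_discreteTopology (f := stepZ X i)).comp (continuous_apply i)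
      exact (isClosed_discrete ({0}ᶜ : Set ℤ)).preimage hc
    · have := ae_zero μ hμ X hX
      refine measure_mono_null ?_ (ae_iff.1 this)
      intro Y hY h
      obtain ⟨n, hn, h0⟩ := h m
      exact hY n hn h0
  · intro Y hY
    have hf := hcon Y hY
    rw [CofBisects, Set.not_infinite] at hf
    obtain ⟨B, hB⟩ := hf.bddAbove
    refine Set.mem_iUnion.2 ⟨max a B, ?_⟩
    intro n hn h0
    have hp : 0 < cnt X (n + 1) := cnt_pos ha (by have := le_max_left a B; omega)
    have := hB ((bis_iff Y hp).2 h0)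
    have := le_max_right a B
    omega

lemma cnt_mono_set {A B : Set ℕ} (h : A ⊆ B) (n : ℕ) : cnt A n ≤ cnt B n := by
  classical
  rw [cnt_eq_card, cnt_eq_card]
  exact Finset.card_le_card fun i hi => by
    simp only [Finset.mem_filter] at hi ⊢
    exact ⟨hi.1, h hi.2⟩

lemma infinite_of_bis {S X : Set ℕ} (hX : X.Infinite) (h : CofBisects S X) : S.Infinite := by
  classical
  intro hfin
  obtain ⟨t, htX, htc⟩ := hX.exists_subset_card_eq (2 * hfin.toFinset.card + 1)
  obtain ⟨n, hn, hlt⟩ := h.exists_gt (t.sup id)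
  have h1 : t.card ≤ cnt X n := by
    rw [cnt_eq_card]
    refine Finset.card_le_card fun i hi => ?_
    have : i ≤ t.sup id := Finset.le_sup (f := id) hi
    simp only [Finset.mem_filter, Finset.mem_range]
    exact ⟨by omega, htX hi⟩
  have h2 : cnt (S ∩ X) n ≤ hfin.toFinset.card := by
    rw [cnt_eq_card]
    refine Finset.card_le_card fun i hi => ?_
    simp only [Finset.mem_filter] at hi
    simpa using hi.2.1
  have h' : (cnt X n : ℝ) ≠ 0 := by
    have : cnt X n ≠ 0 := by omega
    exact_mod_cast this
  simp only [Set.mem_setOf_eq] at hn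
  rw [div_eq_div_iff h' two_ne_zero] at hn
  have : cnt (S ∩ X) n * 2 = 1 * cnt X n := by exact_mod_cast hn
  omega

/-- Every subset of `2^ℕ` not in `ℰ` is, viewed as a family of subsets of `ℕ`,
a cofinally bisecting family; hence `𝔰_{1/2}^∞ ≤ non(ℰ)`. -/
theorem sHalfInf_le_nonE (μ : Measure (ℕ → Bool)) (hμ : IsCantorMeasure μ) :
    (∀ S : Set (ℕ → Bool), ¬ MemE μ S →
      ∀ X : Set ℕ, X.Infinite → ∃ Y ∈ S, CofBisects (toSet Y) X) ∧
    sHalfInf ≤ nonE μ := by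
  refine ⟨main1 μ hμ, ?_⟩
  apply le_csInf
  · refine ⟨_, Set.univ, ?_, rfl⟩
    rintro ⟨F, hF, hsub⟩
    have h0 : μ (⋃ n, F n) = 0 := measure_iUnion_null fun n => (hF n).2
    have h1 : μ Set.univ = 0 := measure_mono_null hsub h0
    have h2 := hμ ∅ (fun _ => true)
    simp [h1] at h2
  · rintro c ⟨S, hS, rfl⟩
    refine le_trans (csInf_le' ⟨{A | A ∈ toSet '' S ∧ A.Infinite}, fun A hA => hA.2, ?_, rfl⟩) ?_
    · intro X hX
      obtain ⟨Y, hY, hb⟩ := main1 μ hμ S hS X hX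
      exact ⟨toSet Y, ⟨⟨Y, hY, rfl⟩, infinite_of_bis hX hb⟩, hb⟩
    · exact (Cardinal.mk_le_mk_of_subset fun A hA => hA.1).trans Cardinal.mk_image_le
end

section
/- cov(ℰ) ≤ 𝔯_{1/2}^∞: the least cardinality of a family of sets in ℰ whose union is all of 2^ℕ is at most the least cardinality of a cofinally 1/2-reaping family of infinite subsets of ℕ. -/
open MeasureTheory Filter Set

/-- `cov(ℰ)`: the least cardinality of a family of sets in `ℰ` covering `2^ℕ`. -/
noncomputable def covE (μ : Measure (ℕ → Bool)) : Cardinal :=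
  sInf {c : Cardinal | ∃ 𝒜 : Set (Set (ℕ → Bool)), (∀ A ∈ 𝒜, MemE μ A) ∧
    ⋃₀ 𝒜 = Set.univ ∧ c = Cardinal.mk 𝒜}

/-- `𝔯_{1/2}^∞`: the least cardinality of a cofinally 1/2-reaping family, i.e. a family
`ℛ` of infinite subsets of `ℕ` such that no single infinite `X ⊆ ℕ` cofinally
bisects every member of `ℛ`. -/
noncomputable def rHalfInf : Cardinal :=
  sInf {c : Cardinal | ∃ ℛ : Set (Set ℕ), (∀ R ∈ ℛ, R.Infinite) ∧
    (¬ ∃ X : Set ℕ, X.Infinite ∧ ∀ R ∈ ℛ, CofBisects X R) ∧ c = Cardinal.mk ℛ}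

noncomputable def rwA : ℕ → ℤ → ℝ
  | 0, x => if x = 0 then 0 else 1
  | m + 1, x => if x = 0 then 0 else (rwA m (x + 1) + rwA m (x - 1)) / 2

lemma rwA_nonneg (m : ℕ) : ∀ x, 0 ≤ rwA m x := by
  induction m with
  | zero => intro x; simp only [rwA]; split_ifs <;> norm_num
  | succ m ih =>
    intro x; simp only [rwA]; split_ifs
    · exact le_rfl
    · have := ih (x + 1); have := ih (x - 1); linarith

lemma rwA_le_one (m : ℕ) : ∀ x, rwA m x ≤ 1 := by
  induction m with
  | zero => intro x; simp only [rwA]; split_ifs <;> norm_num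
  | succ m ih =>
    intro x; simp only [rwA]; split_ifs
    · norm_num
    · have := ih (x + 1); have := ih (x - 1); linarith

lemma rwA_zero (m : ℕ) : rwA m 0 = 0 := by cases m <;> simp [rwA]

lemma rwA_succ_le (m : ℕ) : ∀ x, rwA (m + 1) x ≤ rwA m x := by
  induction m with
  | zero =>
    intro x
    by_cases hx : x = 0
    · subst hx; simp [rwA]
    · have h := rwA_le_one 1 x
      have h0 : rwA 0 x = 1 := by simp [rwA, hx]
      rw [h0]; exact h
  | succ m ih =>
    intro x
    rw [rwA.eq_2 x (m + 1), rwA.eq_2 x m]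
    split_ifs
    · exact le_rfl
    · have := ih (x + 1); have := ih (x - 1); linarith

lemma lin_zero (f : ℕ → ℝ) (h0 : f 0 = 0) (hn : ∀ n, 0 ≤ f n) (h1 : ∀ n, f n ≤ 1)
    (hh : ∀ n, f (n + 1) = (f (n + 2) + f n) / 2) (n : ℕ) : f n = 0 := by
  have key : ∀ n : ℕ, f n = n * f 1 ∧ f (n + 1) = (n + 1) * f 1 := by
    intro n
    induction n with
    | zero => simp [h0]
    | succ n ih =>
      obtain ⟨ha, hb⟩ := ih
      refine ⟨by push_cast; exact hb, ?_⟩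
      have := hh n
      push_cast
      have e : f (n + 1 + 1) = f (n + 2) := rfl
      rw [e]
      linarith
  have hf1 : f 1 = 0 := by
    by_contra hne
    have hpos : 0 < f 1 := lt_of_le_of_ne (hn 1) (Ne.symm hne)
    obtain ⟨k, hk⟩ := exists_nat_gt (1 / f 1)
    rw [div_lt_iff₀ hpos] at hk
    have := (key k).1
    have := h1 k
    linarith
  rw [(key n).1, hf1, mul_zero]

lemma rwA_tendsto (x : ℤ) : Tendsto (fun m => rwA m x) atTop (nhds 0) := by
  have hanti : ∀ x, Antitone (fun m => rwA m x) := fun x =>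
    antitone_nat_of_succ_le (fun m => rwA_succ_le m x)
  have hbdd : ∀ x, BddBelow (range (fun m => rwA m x)) := fun x =>
    ⟨0, by rintro _ ⟨m, rfl⟩; exact rwA_nonneg m x⟩
  have hex : ∀ x, ∃ l, Tendsto (fun m => rwA m x) atTop (nhds l) := fun x =>
    ⟨_, tendsto_atTop_ciInf (hanti x) (hbdd x)⟩
  choose h hh using hex
  have hn : ∀ x, 0 ≤ h x := fun x => ge_of_tendsto' (hh x) (fun m => rwA_nonneg m x)
  have h1 : ∀ x, h x ≤ 1 := fun x => le_of_tendsto' (hh x) (fun m => rwA_le_one m x)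
  have h0 : h 0 = 0 := by
    refine tendsto_nhds_unique (hh 0) ?_
    simp [rwA_zero]
  have hharm : ∀ x, x ≠ 0 → h x = (h (x + 1) + h (x - 1)) / 2 := by
    intro x hx
    refine tendsto_nhds_unique ((tendsto_add_atTop_iff_nat 1).2 (hh x)) ?_
    have := ((hh (x + 1)).add (hh (x - 1))).div_const 2
    refine this.congr (fun m => ?_)
    simp [rwA, hx]
  have hz : h x = 0 := by
    obtain ⟨n, rfl | rfl⟩ := x.eq_nat_or_neg
    · refine lin_zero (fun n => h (n : ℤ)) (by simpa using h0) (fun n => hn _) (fun n => h1 _) ?_ n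
      intro n
      have := hharm ((n + 1 : ℕ) : ℤ) (by omega)
      have e1 : ((n + 1 : ℕ) : ℤ) + 1 = ((n + 2 : ℕ) : ℤ) := by push_cast; ring
      have e2 : ((n + 1 : ℕ) : ℤ) - 1 = (n : ℤ) := by push_cast; ring
      rw [e1, e2] at this
      exact this
    · refine lin_zero (fun n => h (-(n : ℤ))) (by simpa using h0) (fun n => hn _)
        (fun n => h1 _) ?_ n
      intro n
      have := hharm (-((n + 1 : ℕ) : ℤ)) (by omega)
      have e1 : -((n + 1 : ℕ) : ℤ) - 1 = -((n + 2 : ℕ) : ℤ) := by push_cast; ring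
      have e2 : -((n + 1 : ℕ) : ℤ) + 1 = -(n : ℤ) := by push_cast; ring
      rw [e1, e2] at this
      exact this.trans (by ring)
  rw [← hz]
  exact hh x

def bal (e : ℕ → ℕ) (Y : ℕ → Bool) (k : ℕ) : ℤ :=
  ∑ i ∈ Finset.range k, if Y (e i) = true then 1 else -1

lemma bal_congr (e : ℕ → ℕ) (Y g : ℕ → Bool) (k : ℕ) (h : ∀ i < k, Y (e i) = g (e i)) :
    bal e Y k = bal e g k := by
  refine Finset.sum_congr rfl (fun i hi => ?_)
  rw [h i (Finset.mem_range.1 hi)]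

lemma bal_update (e : ℕ → ℕ) (he : Function.Injective e) (g : ℕ → Bool) (k : ℕ) (b : Bool) :
    bal e (Function.update g (e k) b) (k + 1) = bal e g k + if b = true then 1 else -1 := by
  rw [bal, Finset.sum_range_succ]
  congr 1
  · refine Finset.sum_congr rfl (fun i hi => ?_)
    rw [Function.update_of_ne]
    intro h
    have := he h
    have := Finset.mem_range.1 hi
    omega
  · simp

lemma cyl_le (μ : Measure (ℕ → Bool)) (hμ : IsCantorMeasure μ) (e : ℕ → ℕ)
    (he : Function.Injective e) (m : ℕ) : ∀ (k : ℕ) (g : ℕ → Bool),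
    μ {Y | (∀ i < k, Y (e i) = g (e i)) ∧ ∀ j ≤ m, bal e Y (k + j) ≠ 0} ≤
      (1 / 2 : ENNReal) ^ k * ENNReal.ofReal (rwA m (bal e g k)) := by
  have hempty : ∀ (m k : ℕ) (g : ℕ → Bool), bal e g k = 0 →
      μ {Y | (∀ i < k, Y (e i) = g (e i)) ∧ ∀ j ≤ m, bal e Y (k + j) ≠ 0} = 0 := by
    intro m k g h
    have : {Y | (∀ i < k, Y (e i) = g (e i)) ∧ ∀ j ≤ m, bal e Y (k + j) ≠ 0} = ∅ := by
      ext Y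
      simp only [mem_ofPred_eq, mem_empty_iff_false, iff_false]
      rintro ⟨h1, h2⟩
      refine h2 0 (Nat.zero_le _) ?_
      rw [add_zero, bal_congr e Y g k h1, h]
    rw [this, measure_empty]
  induction m with
  | zero =>
    intro k g
    by_cases h : bal e g k = 0
    · rw [hempty _ _ _ h]; exact zero_le
    · have h1 : rwA 0 (bal e g k) = 1 := by simp [rwA, h]
      rw [h1, ENNReal.ofReal_one, mul_one]
      have hc := hμ ((Finset.range k).image e) g
      rw [Finset.card_image_of_injective _ he, Finset.card_range] at hc
      rw [← hc]
      refine measure_mono ?_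
      rintro Y ⟨hY, -⟩ i hi
      obtain ⟨j, hj, rfl⟩ := Finset.mem_image.1 hi
      exact hY j (Finset.mem_range.1 hj)
  | succ m ih =>
    intro k g
    by_cases h : bal e g k = 0
    · rw [hempty _ _ _ h]; exact zero_le
    · have hsub : {Y | (∀ i < k, Y (e i) = g (e i)) ∧ ∀ j ≤ m + 1, bal e Y (k + j) ≠ 0} ⊆
          {Y | (∀ i < k + 1, Y (e i) = (Function.update g (e k) true) (e i)) ∧
            ∀ j ≤ m, bal e Y (k + 1 + j) ≠ 0} ∪
          {Y | (∀ i < k + 1, Y (e i) = (Function.update g (e k) false) (e i)) ∧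
            ∀ j ≤ m, bal e Y (k + 1 + j) ≠ 0} := by
        rintro Y ⟨h1, h2⟩
        have hb : ∀ b, Y (e k) = b →
            (∀ i < k + 1, Y (e i) = (Function.update g (e k) b) (e i)) ∧
            ∀ j ≤ m, bal e Y (k + 1 + j) ≠ 0 := by
          intro b hb
          refine ⟨fun i hi => ?_, fun j hj => ?_⟩
          · rcases Nat.lt_succ_iff_lt_or_eq.1 hi with hi | rfl
            · rw [Function.update_of_ne, h1 i hi]
              intro h
              have := he h
              omega
            · simpa using hb
          · have := h2 (1 + j) (by omega)
            rwa [← add_assoc] at this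
        cases hY : Y (e k) with
        | true => exact Or.inl (hb _ hY)
        | false => exact Or.inr (hb _ hY)
      refine (measure_mono hsub).trans ((measure_union_le _ _).trans ?_)
      refine (add_le_add (ih (k + 1) _) (ih (k + 1) _)).trans ?_
      rw [bal_update e he, bal_update e he]
      have hr : rwA (m + 1) (bal e g k) =
          (1 / 2) * (rwA m (bal e g k + 1) + rwA m (bal e g k - 1)) := by
        simp only [rwA, h, if_false]; ring
      rw [hr, ENNReal.ofReal_mul (by norm_num),
        ENNReal.ofReal_add (rwA_nonneg _ _) (rwA_nonneg _ _)]
      have h2 : ENNReal.ofReal (1 / 2) = 1 / 2 := by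
        rw [ENNReal.ofReal_div_of_pos (by norm_num)]; simp
      rw [h2, pow_succ]
      simp only [if_true, Bool.false_eq_true, if_false, ← sub_eq_add_neg]
      apply le_of_eq
      ring

lemma avoid_null (μ : Measure (ℕ → Bool)) (hμ : IsCantorMeasure μ) (e : ℕ → ℕ)
    (he : Function.Injective e) (N : ℕ) : μ {Y | ∀ k ≥ N, bal e Y k ≠ 0} = 0 := by
  have hsub : {Y | ∀ k ≥ N, bal e Y k ≠ 0} ⊆ ⋃ t : Finset ℕ,
      {Y | (∀ i < N, Y (e i) = (fun n => decide (n ∈ t)) (e i)) ∧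
        ∀ k ≥ N, bal e Y k ≠ 0} := by
    intro Y hY
    refine mem_iUnion.2 ⟨((Finset.range N).image e).filter (fun n => Y n = true), ?_, hY⟩
    intro i hi
    have : e i ∈ (Finset.range N).image e :=
      Finset.mem_image_of_mem _ (Finset.mem_range.2 hi)
    cases h : Y (e i)
    · simp [h]
    · simp only [Finset.mem_filter, this, h, and_self, decide_true]
  refine measure_mono_null hsub (measure_iUnion_null (fun t => ?_))
  set g : ℕ → Bool := fun n => decide (n ∈ t) with hg
  have hle : ∀ m, μ {Y | (∀ i < N, Y (e i) = g (e i)) ∧ ∀ k ≥ N, bal e Y k ≠ 0} ≤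
      ENNReal.ofReal (rwA m (bal e g N)) := by
    intro m
    refine (measure_mono ?_).trans ((cyl_le μ hμ e he m N g).trans ?_)
    · rintro Y ⟨h1, h2⟩
      exact ⟨h1, fun j _ => h2 _ (by omega)⟩
    · refine mul_le_of_le_one_left' (pow_le_one₀ zero_le ?_)
      simp
  have ht := ENNReal.tendsto_ofReal (rwA_tendsto (bal e g N))
  rw [ENNReal.ofReal_zero] at ht
  exact le_antisymm (ge_of_tendsto' ht hle) zero_le

lemma avoid_closed (e : ℕ → ℕ) (N : ℕ) : IsClosed {Y | ∀ k ≥ N, bal e Y k ≠ 0} := by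
  have hc : ∀ k, Continuous (fun Y : ℕ → Bool => bal e Y k) := by
    intro k
    unfold bal
    refine continuous_finsetSum _ (fun i _ => ?_)
    exact (continuous_of_discreteTopology (f := fun b : Bool => if b = true then (1 : ℤ) else -1)).comp
      (continuous_apply (e i))
  have : {Y | ∀ k ≥ N, bal e Y k ≠ 0} = ⋂ k, ⋂ (_ : k ≥ N), (fun Y => bal e Y k) ⁻¹' {0}ᶜ := by
    ext Y; simp
  rw [this]
  exact isClosed_iInter fun k => isClosed_iInter fun _ =>
    (isClosed_discrete _).preimage (hc k)

lemma bal_cnt (R : Set ℕ) (hR : R.Infinite) (Y : ℕ → Bool) (k : ℕ) :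
    cnt R (Nat.nth (· ∈ R) k) = k ∧
    bal (Nat.nth (· ∈ R)) Y k = 2 * (cnt ({i | Y i = true} ∩ R) (Nat.nth (· ∈ R) k) : ℤ) - k := by
  classical
  set e := Nat.nth (· ∈ R) with hedef
  have hinj : Function.Injective e := Nat.nth_injective hR
  have hmono : StrictMono e := Nat.nth_strictMono hR
  have himg : R ∩ Iio (e k) = e '' (Iio k) := by
    ext n
    simp only [mem_inter_iff, mem_Iio, mem_image]
    constructor
    · rintro ⟨h1, h2⟩
      obtain ⟨i, rfl⟩ : n ∈ range e := by
        rw [hedef, Nat.range_nth_of_infinite (p := (· ∈ R)) hR]; exact h1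
      exact ⟨i, hmono.lt_iff_lt.1 h2, rfl⟩
    · rintro ⟨i, hi, rfl⟩
      exact ⟨Nat.nth_mem_of_infinite hR i, hmono hi⟩
  have hS : ({i | Y i = true} ∩ R) ∩ Iio (e k) =
      e '' (((Finset.range k).filter (fun i => Y (e i) = true) : Finset ℕ) : Set ℕ) := by
    rw [inter_assoc, himg]
    ext n
    simp only [mem_inter_iff, mem_ofPred_eq, mem_image, mem_Iio, Finset.coe_filter,
      Finset.mem_range]
    constructor
    · rintro ⟨h, i, hi, rfl⟩; exact ⟨i, ⟨hi, h⟩, rfl⟩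
    · rintro ⟨i, ⟨hi, h⟩, rfl⟩; exact ⟨h, i, hi, rfl⟩
  constructor
  · rw [cnt, himg, Nat.card_image_of_injective hinj]
    simp
  · rw [cnt, hS, Nat.card_image_of_injective hinj]
    simp only [Nat.card_eq_fintype_card, Fintype.card_coe, SetLike.coe_sort_coe, Finset.coe_sort_coe]
    unfold bal
    rw [Finset.sum_ite]
    have := Finset.card_filter_add_card_filter_not (s := Finset.range k) (fun i => Y (e i) = true)
    rw [Finset.card_range] at this
    simp only [Finset.sum_const, nsmul_eq_mul, mul_one, mul_neg]
    omega

lemma not_bis_memE (μ : Measure (ℕ → Bool)) (hμ : IsCantorMeasure μ) (R : Set ℕ)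
    (hR : R.Infinite) : MemE μ {Y | ¬ CofBisects {i | Y i = true} R} := by
  have hinj : Function.Injective (Nat.nth (· ∈ R)) := Nat.nth_injective hR
  refine ⟨fun N => {Y | ∀ k ≥ N, bal (Nat.nth (· ∈ R)) Y k ≠ 0}, fun N =>
    ⟨avoid_closed _ N, avoid_null μ hμ _ hinj N⟩, ?_⟩
  intro Y hY
  rw [mem_ofPred_eq, CofBisects, not_infinite] at hY
  obtain ⟨M, hM⟩ := hY.bddAbove
  refine mem_iUnion.2 ⟨M + 1, fun k hk h0 => ?_⟩
  obtain ⟨h1, h2⟩ := bal_cnt R hR Y k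
  have hle : k ≤ Nat.nth (· ∈ R) k := (Nat.nth_strictMono hR).le_apply
  have : Nat.nth (· ∈ R) k ≤ M := by
    apply hM
    rw [mem_ofPred_eq, h1]
    have hk0 : (k : ℝ) ≠ 0 := by norm_cast; omega
    have h3 : (k : ℤ) = 2 * (cnt ({i | Y i = true} ∩ R) (Nat.nth (· ∈ R) k) : ℤ) := by omega
    have h4 : (k : ℝ) = 2 * (cnt ({i | Y i = true} ∩ R) (Nat.nth (· ∈ R) k) : ℝ) := by
      exact_mod_cast h3
    rw [div_eq_div_iff hk0 (by norm_num)]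
    linarith
  omega

lemma fin_not_bis (X R : Set ℕ) (hR : R.Infinite) (hX : ¬ X.Infinite) : ¬ CofBisects X R := by
  classical
  rw [not_infinite] at hX
  intro h
  set C := Nat.card X
  have : Finite X := hX
  obtain ⟨n, hn, hlt⟩ := h.exists_gt (Nat.nth (· ∈ R) (2 * C + 1))
  have h1 : cnt (X ∩ R) n ≤ C :=
    Nat.card_mono hX (fun i hi => hi.1.1)
  have h2 : 2 * C + 1 ≤ cnt R n := by
    rw [← (bal_cnt R hR (fun _ => true) (2 * C + 1)).1]
    exact Nat.card_mono ((finite_Iio n).subset inter_subset_right)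
      (fun i hi => ⟨hi.1, lt_trans hi.2 hlt⟩)
  rw [mem_ofPred_eq, div_eq_div_iff (by norm_cast; omega) (by norm_num)] at hn
  norm_cast at hn
  omega

lemma self_not_bis (X : Set ℕ) : ¬ CofBisects X X := by
  intro h
  obtain ⟨n, hn⟩ := h.nonempty
  rw [mem_ofPred_eq, inter_self] at hn
  by_cases h0 : (cnt X n : ℝ) = 0
  · rw [h0] at hn; norm_num at hn
  · rw [div_self h0] at hn; norm_num at hn

/-- `cov(ℰ) ≤ 𝔯_{1/2}^∞`. -/
theorem covE_le_rHalfInf (μ : Measure (ℕ → Bool)) (hμ : IsCantorMeasure μ) :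
    covE μ ≤ rHalfInf := by
  unfold rHalfInf
  refine le_csInf ?_ ?_
  · refine ⟨_, {R | R.Infinite}, fun R hR => hR, ?_, rfl⟩
    rintro ⟨X, hX, h⟩
    exact self_not_bis X (h X hX)
  · rintro c ⟨ℛ, hinf, hno, rfl⟩
    refine le_trans (csInf_le' ⟨(fun R => {Y | ¬ CofBisects {i | Y i = true} R}) '' ℛ, ?_, ?_, rfl⟩)
      Cardinal.mk_image_le
    · rintro _ ⟨R, hR, rfl⟩
      exact not_bis_memE μ hμ R (hinf R hR)
    · refine eq_univ_of_forall (fun Y => ?_)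
      by_cases hY : {i | Y i = true}.Infinite
      · have : ∃ R ∈ ℛ, ¬ CofBisects {i | Y i = true} R := by
          by_contra hcon
          push Not at hcon
          exact hno ⟨_, hY, hcon⟩
        obtain ⟨R, hR, hb⟩ := this
        exact ⟨_, ⟨R, hR, rfl⟩, hb⟩
      · have : ∃ R, R ∈ ℛ := by
          by_contra hcon
          push Not at hcon
          exact hno ⟨univ, infinite_univ, fun R hR => absurd hR (hcon R)⟩
        obtain ⟨R, hR⟩ := this
        exact ⟨_, ⟨R, hR, rfl⟩, fin_not_bis _ R (hinf R hR) hY⟩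
end

section
/- Let A, B be infinite subsets of ℕ and let a_1 < a_2 < a_3 < … be the increasing enumeration of A (indices starting at 1). For each n ∈ ℕ define A_n = {a_j : 2^{n+1} − 1 ≤ j ≤ 2^{n+2} − 2}, so that (A_n : n ∈ ℕ) is a block sequence with |A_n| = 2^{n+1}. If B splits the block sequence (A_n : n ∈ ℕ), i.e., both {n : A_n ⊆ B} and {n : A_n ∩ B = ∅} are infinite, then B cofinally bisects A. -/
open Filter Set

open Classical in
noncomputable def cB (a : ℕ → ℕ) (B : Set ℕ) (m : ℕ) : ℕ :=
  ((Finset.Icc 1 m).filter (fun j => a j ∈ B)).card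

lemma cB_succ_mem (a : ℕ → ℕ) (B : Set ℕ) (m : ℕ) (h : a (m+1) ∈ B) :
    cB a B (m+1) = cB a B m + 1 := by
  classical
  unfold cB
  rw [← Finset.insert_Icc_right_eq_Icc_add_one (by omega : 1 ≤ m + 1), Finset.filter_insert, if_pos h,
    Finset.card_insert_of_notMem (by simp)]

lemma cB_succ_notMem (a : ℕ → ℕ) (B : Set ℕ) (m : ℕ) (h : a (m+1) ∉ B) :
    cB a B (m+1) = cB a B m := by
  classical
  unfold cB
  rw [← Finset.insert_Icc_right_eq_Icc_add_one (by omega : 1 ≤ m + 1), Finset.filter_insert, if_neg h]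

lemma cB_le (a : ℕ → ℕ) (B : Set ℕ) (m : ℕ) : cB a B m ≤ m := by
  classical
  unfold cB
  exact (Finset.card_filter_le _ _).trans (by simp)

lemma cB_block_mem (a : ℕ → ℕ) (B : Set ℕ) (s k : ℕ)
    (h : ∀ j, s < j → j ≤ s + k → a j ∈ B) : cB a B (s+k) = cB a B s + k := by
  induction k with
  | zero => rfl
  | succ k ih =>
    rw [← add_assoc, cB_succ_mem a B (s+k) (h _ (by omega) (by omega)),
      ih (fun j h1 h2 => h j h1 (by omega))]; omega

lemma cB_block_notMem (a : ℕ → ℕ) (B : Set ℕ) (s k : ℕ)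
    (h : ∀ j, s < j → j ≤ s + k → a j ∉ B) : cB a B (s+k) = cB a B s := by
  induction k with
  | zero => rfl
  | succ k ih =>
    rw [← add_assoc, cB_succ_notMem a B (s+k) (h _ (by omega) (by omega)),
      ih (fun j h1 h2 => h j h1 (by omega))]

lemma cB_ivt (a : ℕ → ℕ) (B : Set ℕ) (s k : ℕ) (hs : s < 2 * cB a B s)
    (h : ∀ m, s ≤ m → 2 * cB a B m ≠ m) : s + k < 2 * cB a B (s + k) := by
  induction k with
  | zero => exact hs
  | succ k ih =>
    have := h (s + k + 1) (by omega)
    rw [← add_assoc]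
    by_cases hm : a (s+k+1) ∈ B
    · rw [cB_succ_mem a B _ hm] at *; omega
    · rw [cB_succ_notMem a B _ hm] at *; omega

lemma cnt_eq_cB (A B : Set ℕ) (a : ℕ → ℕ)
    (ha_mem : ∀ j, 1 ≤ j → a j ∈ A)
    (ha_mono : ∀ j k, 1 ≤ j → j < k → a j < a k)
    (ha_surj : ∀ x ∈ A, ∃ j, 1 ≤ j ∧ a j = x) (m : ℕ) :
    cnt (B ∩ A) (a (m+1)) = cB a B m := by
  classical
  have : (B ∩ A) ∩ Set.Iio (a (m+1)) =
      (((Finset.Icc 1 m).filter (fun j => a j ∈ B)).image a : Finset ℕ) := by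
    ext x
    simp only [Set.mem_inter_iff, Set.mem_Iio, Finset.coe_image, Set.mem_image, Finset.mem_coe,
      Finset.mem_filter, Finset.mem_Icc]
    constructor
    · rintro ⟨⟨hxB, hxA⟩, hx⟩
      obtain ⟨j, hj, rfl⟩ := ha_surj x hxA
      refine ⟨j, ⟨⟨hj, ?_⟩, hxB⟩, rfl⟩
      by_contra hc
      rcases Nat.lt_or_ge (m+1) j with h | h
      · have := ha_mono (m+1) j (by omega) h
        omega
      · have : j = m + 1 := by omega
        subst this; omega
    · rintro ⟨j, ⟨⟨h1, h2⟩, h3⟩, rfl⟩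
      exact ⟨⟨h3, ha_mem j h1⟩, ha_mono _ _ h1 (by omega)⟩
  unfold cnt cB
  rw [this, Nat.card_coe_set_eq, Set.ncard_coe_finset, Finset.card_image_of_injOn]
  intro i hi j hj hij
  simp only [Finset.coe_filter, Finset.mem_Icc, Set.mem_setOf_eq] at hi hj
  rcases lt_trichotomy i j with h | h | h
  · have := ha_mono i j hi.1.1 h; omega
  · exact h
  · have := ha_mono j i hj.1.1 h; omega

/-- Let `A, B` be infinite subsets of `ℕ`, `a` the increasing enumeration of `A`
with indices starting at 1, and for `n ∈ ℕ` let
`A_n = {a_j : 2^{n+1} − 1 ≤ j ≤ 2^{n+2} − 2}` (so `|A_n| = 2^{n+1}`).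
If `B` splits the block sequence `(A_n)`, i.e. both `{n : A_n ⊆ B}` and
`{n : A_n ∩ B = ∅}` are infinite, then `B` cofinally bisects `A`. -/
theorem cofBisects_of_splits_blocks
    (A B : Set ℕ) (hA : A.Infinite) (hB : B.Infinite)
    (a : ℕ → ℕ)
    (ha_mem : ∀ j, 1 ≤ j → a j ∈ A)
    (ha_mono : ∀ j k, 1 ≤ j → j < k → a j < a k)
    (ha_surj : ∀ x ∈ A, ∃ j, 1 ≤ j ∧ a j = x)
    (Ab : ℕ → Set ℕ)
    (hAb : ∀ n, Ab n = {x | ∃ j, 2 ^ (n + 1) - 1 ≤ j ∧ j ≤ 2 ^ (n + 2) - 2 ∧ a j = x})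
    (h1 : {n : ℕ | Ab n ⊆ B}.Infinite)
    (h2 : {n : ℕ | Ab n ∩ B = ∅}.Infinite) :
    CofBisects B A := by
  have key : ∀ N, ∃ m, N < m ∧ 2 * cB a B m = m := by
    intro N
    by_contra! hc
    obtain ⟨n, hn, hNn⟩ := h1.exists_gt N
    obtain ⟨p, hp, hnp⟩ := h2.exists_gt n
    have e1 : n + 1 < 2 ^ (n + 1) := Nat.lt_two_pow_self
    have e2 : 2 ^ (n + 2) = 2 * 2 ^ (n + 1) := by ring
    have e3 : p + 1 < 2 ^ (p + 1) := Nat.lt_two_pow_self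
    have e4 : 2 ^ (p + 2) = 2 * 2 ^ (p + 1) := by ring
    have e5 : 2 ^ (n + 1) ≤ 2 ^ (p + 1) := Nat.pow_le_pow_right (by omega) (by omega)
    have b1 := cB_block_mem a B (2 ^ (n+1) - 2) (2 ^ (n+1)) (by
      intro j hj hj'
      apply hn
      rw [hAb]
      exact ⟨j, by omega, by omega, rfl⟩)
    have b2 := cB_block_notMem a B (2 ^ (p+1) - 2) (2 ^ (p+1)) (by
      intro j hj hj' hjB
      have : a j ∈ Ab p ∩ B := by
        refine ⟨?_, hjB⟩
        rw [hAb]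
        exact ⟨j, by omega, by omega, rfl⟩
      rw [show Ab p ∩ B = ∅ from hp] at this
      exact this)
    have b3 := cB_le a B (2 ^ (p+1) - 2)
    have b4 := cB_ivt a B (2 ^ (n+1) - 2 + 2 ^ (n+1))
      ((2 ^ (p+1) - 2 + 2 ^ (p+1)) - (2 ^ (n+1) - 2 + 2 ^ (n+1))) (by omega)
      (fun m hm => hc m (by omega))
    rw [Nat.add_sub_cancel' (by omega)] at b4
    omega
  have hge : ∀ m, m ≤ a (m+1) := by
    intro m
    induction m with
    | zero => omega
    | succ m ih =>
      have := ha_mono (m+1) (m+1+1) (by omega) (by omega)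
      omega
  refine Set.infinite_of_forall_exists_gt fun N => ?_
  obtain ⟨m, hm, hmB⟩ := key N
  refine ⟨a (m+1), ?_, lt_of_lt_of_le hm (hge m)⟩
  have c1 := cnt_eq_cB A B a ha_mem ha_mono ha_surj m
  have c2 := cnt_eq_cB A Set.univ a ha_mem ha_mono ha_surj m
  rw [Set.univ_inter] at c2
  have c3 : cB a Set.univ m = m := by simp [cB]
  rw [Set.mem_setOf_eq, c1, c2, c3, div_eq_div_iff (by norm_cast; omega) (by norm_num)]
  norm_cast
  omega
end

section
/- 𝔰_{1/2}^∞ ≤ 𝔣𝔰_g ≤ 𝔣𝔰: the least cardinality of a cofinally bisecting family is at most the least cardinality of a family of infinite subsets of ℕ splitting all good block sequences, which in turn is at most the least cardinality of a family splitting all block sequences. -/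
open Filter Set

/-- A block sequence: a sequence of nonempty finite subsets of `ℕ` with
`max (A n) < min (A (n+1))` for all `n`. -/
def IsBlockSeq (A : ℕ → Finset ℕ) : Prop :=
  (∀ n, (A n).Nonempty) ∧ ∀ n, ∀ x ∈ A n, ∀ y ∈ A (n + 1), x < y

/-- A good block sequence: a block sequence whose sequence of block sizes is
given by a computable function. -/
def IsGoodBlockSeq (A : ℕ → Finset ℕ) : Prop :=
  IsBlockSeq A ∧ ∃ f : ℕ → ℕ, Computable f ∧ ∀ n, (A n).card = f n

/-- `B` splits a block sequence `A`: both `{n : A n ⊆ B}` and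
`{n : A n ∩ B = ∅}` are infinite. -/
def SplitsBlocks (B : Set ℕ) (A : ℕ → Finset ℕ) : Prop :=
  {n : ℕ | ∀ x ∈ A n, x ∈ B}.Infinite ∧ {n : ℕ | ∀ x ∈ A n, x ∉ B}.Infinite

/-- `𝔣𝔰`: the least cardinality of a family of infinite subsets of `ℕ`
splitting every block sequence. -/
noncomputable def fs : Cardinal :=
  sInf {c : Cardinal | ∃ ℱ : Set (Set ℕ), (∀ F ∈ ℱ, F.Infinite) ∧
    (∀ A : ℕ → Finset ℕ, IsBlockSeq A → ∃ B ∈ ℱ, SplitsBlocks B A) ∧ c = Cardinal.mk ℱ}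

/-- `𝔣𝔰_g`: the least cardinality of a family of infinite subsets of `ℕ`
splitting every good block sequence. -/
noncomputable def fsg : Cardinal :=
  sInf {c : Cardinal | ∃ ℱ : Set (Set ℕ), (∀ F ∈ ℱ, F.Infinite) ∧
    (∀ A : ℕ → Finset ℕ, IsGoodBlockSeq A → ∃ B ∈ ℱ, SplitsBlocks B A) ∧ c = Cardinal.mk ℱ}

theorem blk_lt {A : ℕ → Finset ℕ} (h : IsBlockSeq A) {i j : ℕ} (hij : i < j) :
    ∀ x ∈ A i, ∀ y ∈ A j, x < y := by
  induction j, hij using Nat.le_induction with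
  | base => exact h.2 i
  | succ j _ ih =>
    intro x hx y hy
    obtain ⟨z, hz⟩ := h.1 j
    exact (ih x hx z hz).trans (h.2 j z hz y hy)

theorem exists_split {A : ℕ → Finset ℕ} (h : IsBlockSeq A) :
    ∃ B : Set ℕ, B.Infinite ∧ SplitsBlocks B A := by
  have hdis : ∀ i j x, x ∈ A i → x ∈ A j → i = j := by
    intro i j x hi hj
    rcases lt_trichotomy i j with hl | hl | hl
    · exact absurd (blk_lt h hl x hi x hj) (lt_irrefl _)
    · exact hl
    · exact absurd (blk_lt h hl x hj x hi) (lt_irrefl _)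
  refine ⟨{x | ∃ n, x ∈ A (2 * n)}, ?_, ?_, ?_⟩
  · choose a ha using h.1
    refine Set.infinite_of_injective_forall_mem (f := fun n => a (2 * n)) ?_ (fun n => ⟨n, ha _⟩)
    intro m n hmn
    have h1 := ha (2 * m)
    have h2 := ha (2 * n)
    simp only at hmn
    rw [hmn] at h1
    have := hdis _ _ _ h1 h2
    omega
  · refine Set.infinite_of_injective_forall_mem (f := fun n : ℕ => 2 * n) ?_ ?_
    · intro m n hmn
      simp only at hmn
      omega
    · intro n x hx
      exact ⟨n, hx⟩
  · refine Set.infinite_of_injective_forall_mem (f := fun n : ℕ => 2 * n + 1) ?_ ?_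
    · intro m n hmn
      simp only at hmn
      omega
    · rintro n x hx ⟨m, hm⟩
      have := hdis _ _ _ hx hm
      omega

theorem cross {g : ℕ → ℕ} (hg : Monotone g)
    (h1 : ∀ N, ∃ k ≥ N, k ≤ 2 * g k) (h2 : ∀ N, ∃ k ≥ N, 2 * g k ≤ k) (N : ℕ) :
    ∃ k ≥ N, 2 * g k = k := by
  by_contra! hne
  obtain ⟨k0, hk0, hk0'⟩ := h1 N
  have key : ∀ k ≥ k0, k < 2 * g k := by
    intro k hk
    induction k, hk using Nat.le_induction with
    | base => have := hne k0 hk0; omega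
    | succ k hk ih =>
      have := hne (k + 1) (by omega)
      have := hg (Nat.le_succ k)
      simp only [Nat.succ_eq_add_one] at this
      omega
  obtain ⟨k1, hk1, hk1'⟩ := h2 k0
  have := key k1 hk1
  omega

theorem cnt_mono (X : Set ℕ) : Monotone (cnt X) := by
  intro m n hmn
  unfold cnt
  exact Nat.card_mono ((Set.finite_Iio n).inter_of_right X)
    (Set.inter_subset_inter_right _ (Set.Iio_subset_Iio hmn))

theorem computable_two_pow : Computable (fun n : ℕ => 2 ^ n) := by
  have h : Primrec (fun n : ℕ => Nat.rec (motive := fun _ => ℕ) 1 (fun _ y => 2 * y) n) :=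
    Primrec.nat_rec₁ 1 (Primrec.nat_mul.comp (Primrec.const 2) Primrec.snd)
  refine (h.of_eq ?_).to_comp
  intro n
  induction n with
  | zero => rfl
  | succ n ih => simp only [ih]; ring

theorem bisect {F : Set (Set ℕ)}
    (hF : ∀ A : ℕ → Finset ℕ, IsGoodBlockSeq A → ∃ B ∈ F, SplitsBlocks B A)
    (X : Set ℕ) (hX : X.Infinite) : ∃ S ∈ F, CofBisects S X := by
  classical
  set e : ℕ → ℕ := Nat.nth (· ∈ X) with he
  have hmono : StrictMono e := Nat.nth_strictMono hX
  have hmem : ∀ k, e k ∈ X := fun k => Nat.nth_mem_of_infinite hX k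
  have hsurj : ∀ x ∈ X, ∃ k, e k = x := by
    intro x hx
    exact ⟨Nat.count (· ∈ X) x, Nat.nth_count hx⟩
  have hXe : ∀ k, X ∩ Set.Iio (e k) = ((Finset.range k).image e : Finset ℕ) := by
    intro k
    ext x
    simp only [Set.mem_inter_iff, Set.mem_Iio, Finset.coe_image, Finset.coe_range, Set.mem_image]
    constructor
    · rintro ⟨hx, hxk⟩
      obtain ⟨j, rfl⟩ := hsurj x hx
      exact ⟨j, hmono.lt_iff_lt.1 hxk, rfl⟩
    · rintro ⟨j, hj, rfl⟩
      exact ⟨hmem j, hmono hj⟩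
  have hcX : ∀ k, cnt X (e k) = k := by
    intro k
    unfold cnt
    rw [hXe k, Nat.card_coe_set_eq, Set.ncard_coe_finset,
      Finset.card_image_of_injective _ hmono.injective, Finset.card_range]
  let A : ℕ → Finset ℕ := fun n => (Finset.Ico (2 ^ n) (2 ^ (n + 1))).image e
  have hcard : ∀ n, (A n).card = 2 ^ n := by
    intro n
    simp only [A]
    rw [Finset.card_image_of_injective _ hmono.injective, Nat.card_Ico, pow_succ]
    omega
  have hA : IsGoodBlockSeq A := by
    refine ⟨⟨?_, ?_⟩, fun n => 2 ^ n, computable_two_pow, hcard⟩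
    · intro n
      rw [← Finset.card_pos, hcard]
      positivity
    · intro n x hx y hy
      simp only [A, Finset.mem_image, Finset.mem_Ico] at hx hy
      obtain ⟨i, hi, rfl⟩ := hx
      obtain ⟨j, hj, rfl⟩ := hy
      exact hmono (by omega)
  obtain ⟨B, hB, hB1, hB2⟩ := hF A hA
  refine ⟨B, hB, ?_⟩
  have hbig : ∀ N n : ℕ, N < n → N ≤ 2 ^ (n + 1) := fun N n h =>
    (Nat.lt_two_pow_self (n := n + 1)).le.trans' (by omega)
  have hcr := cross (g := fun k => cnt (B ∩ X) (e k))
    ((cnt_mono (B ∩ X)).comp hmono.monotone) ?_ ?_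
  · refine Set.infinite_of_forall_exists_gt ?_
    intro N
    obtain ⟨k, hk, hk'⟩ := hcr (N + 1)
    refine ⟨e k, ?_, ?_⟩
    · simp only [Set.mem_ofPred_eq]
      rw [hcX k]
      have hk0 : (k : ℝ) ≠ 0 := by
        have : k ≠ 0 := by omega
        exact_mod_cast this
      have h2 : 2 * (cnt (B ∩ X) (e k) : ℝ) = k := by exact_mod_cast hk'
      field_simp
      linarith
    · have := hmono.le_apply (x := k)
      omega
  · intro N
    obtain ⟨n, hn, hNn⟩ := hB1.exists_gt N
    refine ⟨2 ^ (n + 1), hbig N n hNn, ?_⟩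
    have : 2 ^ n ≤ cnt (B ∩ X) (e (2 ^ (n + 1))) := by
      rw [← hcard n, ← Set.ncard_coe_finset]
      unfold cnt
      rw [Nat.card_coe_set_eq]
      refine Set.ncard_le_ncard ?_ ((Set.finite_Iio _).inter_of_right _)
      intro x hx
      have hxB := hn x hx
      simp only [A, Finset.coe_image, Set.mem_image, Finset.coe_Ico, Set.mem_Ico] at hx
      obtain ⟨i, hi, rfl⟩ := hx
      exact ⟨⟨hxB, hmem i⟩, hmono hi.2⟩
    have hp : 2 ^ (n + 1) = 2 ^ n * 2 := pow_succ 2 n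
    omega
  · intro N
    obtain ⟨n, hn, hNn⟩ := hB2.exists_gt N
    refine ⟨2 ^ (n + 1), hbig N n hNn, ?_⟩
    have : cnt (B ∩ X) (e (2 ^ (n + 1))) ≤ 2 ^ n := by
      rw [← hcX (2 ^ n)]
      unfold cnt
      refine Nat.card_mono ((Set.finite_Iio _).inter_of_right _) ?_
      rintro x ⟨⟨hxB, hxX⟩, hx⟩
      obtain ⟨i, rfl⟩ := hsurj x hxX
      refine ⟨hxX, ?_⟩
      by_contra hge
      have hge' : 2 ^ n ≤ i := by
        simpa [hmono.lt_iff_lt] using hge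
      exact hn (e i) (Finset.mem_image_of_mem _
        (Finset.mem_Ico.2 ⟨hge', hmono.lt_iff_lt.1 hx⟩)) hxB
    have hp : 2 ^ (n + 1) = 2 ^ n * 2 := pow_succ 2 n
    omega

/-- `𝔰_{1/2}^∞ ≤ 𝔣𝔰_g ≤ 𝔣𝔰`. -/
theorem sHalfInf_le_fsg_le_fs : sHalfInf ≤ fsg ∧ fsg ≤ fs := by
  constructor
  · refine le_csInf ⟨_, {B : Set ℕ | B.Infinite}, fun F h => h, ?_, rfl⟩ ?_
    · intro A hA
      obtain ⟨B, h1, h2⟩ := exists_split hA.1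
      exact ⟨B, h1, h2⟩
    · rintro c ⟨F, h1, h2, rfl⟩
      exact csInf_le' ⟨F, h1, bisect h2, rfl⟩
  · refine le_csInf ⟨_, {B : Set ℕ | B.Infinite}, fun F h => h, ?_, rfl⟩ ?_
    · intro A hA
      obtain ⟨B, h1, h2⟩ := exists_split hA
      exact ⟨B, h1, h2⟩
    · rintro c ⟨F, h1, h2, rfl⟩
      exact csInf_le' ⟨F, h1, fun A hA => h2 A hA.1, rfl⟩
end

section
/- 𝔣𝔯 ≤ 𝔣𝔯_g ≤ 𝔯_{1/2}^∞: the least cardinality of a family of block sequences not all split by a single set is at most the least cardinality of such a family consisting of good block sequences, which in turn is at most the least cardinality of a cofinally 1/2-reaping family. -/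
open Filter Set

/-- `𝔣𝔯`: the least cardinality of a family of block sequences such that no
single `B ⊆ ℕ` splits all of its members. -/
noncomputable def fr : Cardinal :=
  sInf {c : Cardinal | ∃ ℱ : Set (ℕ → Finset ℕ), (∀ A ∈ ℱ, IsBlockSeq A) ∧
    (¬ ∃ B : Set ℕ, ∀ A ∈ ℱ, SplitsBlocks B A) ∧ c = Cardinal.mk ℱ}

/-- `𝔣𝔯_g`: the least cardinality of a family of good block sequences such that
no single `B ⊆ ℕ` splits all of its members. -/
noncomputable def frg : Cardinal :=
  sInf {c : Cardinal | ∃ ℱ : Set (ℕ → Finset ℕ), (∀ A ∈ ℱ, IsGoodBlockSeq A) ∧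
    (¬ ∃ B : Set ℕ, ∀ A ∈ ℱ, SplitsBlocks B A) ∧ c = Cardinal.mk ℱ}

theorem aux_ivt (D : ℕ → ℤ) (hD : ∀ k, D k - 1 ≤ D (k+1)) (a b : ℕ) (hab : a ≤ b)
    (ha : 0 < D a) (hb : D b < 0) : ∃ k, a ≤ k ∧ D k = 0 := by
  by_contra hcon
  push Not at hcon
  have : ∀ k, a ≤ k → 0 < D k := by
    intro k hk
    induction k, hk using Nat.le_induction with
    | base => exact ha
    | succ k hk ih =>
      have h1 := hD k
      have h2 := hcon (k+1) (by omega)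
      omega
  have := this b hab
  omega

open Classical in
noncomputable def auxBlk (R : Set ℕ) (n : ℕ) : Finset ℕ :=
  (Finset.Ico (2^n - 1) (2^(n+1) - 1)).image (Nat.nth (· ∈ R))

open Classical in
noncomputable def auxCount (B R : Set ℕ) (k : ℕ) : Finset ℕ :=
  (Finset.range k).filter (fun i => Nat.nth (· ∈ R) i ∈ B)

theorem auxBlk_card (R : Set ℕ) (hR : R.Infinite) (n : ℕ) : (auxBlk R n).card = 2^n := by
  classical
  unfold auxBlk
  rw [Finset.card_image_of_injective _ (Nat.nth_injective (p := (· ∈ R)) hR), Nat.card_Ico, pow_succ]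
  have : 0 < 2^n := by positivity
  omega

theorem auxBlk_good (R : Set ℕ) (hR : R.Infinite) : IsGoodBlockSeq (auxBlk R) := by
  classical
  refine ⟨⟨fun n => ?_, fun n x hx y hy => ?_⟩, fun n => 2^n, ?_, auxBlk_card R hR⟩
  · rw [← Finset.card_pos, auxBlk_card R hR]; positivity
  · simp only [auxBlk, Finset.mem_image, Finset.mem_Ico] at hx hy
    obtain ⟨i, hi, rfl⟩ := hx
    obtain ⟨j, hj, rfl⟩ := hy
    exact Nat.nth_strictMono hR (by omega)
  · have h : Primrec (fun n : ℕ => 2^n) := by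
      have := Primrec.nat_rec₁ (f := fun _ r => 2 * r) 1
        ((Primrec.nat_mul.comp₂ (Primrec₂.const 2) Primrec₂.right))
      refine this.of_eq fun n => ?_
      induction n with
      | zero => rfl
      | succ n ih => simp only [pow_succ] at *; omega
    exact h.to_comp

theorem cnt_inter_nth (B R : Set ℕ) (hR : R.Infinite) (k : ℕ) :
    cnt (B ∩ R) (Nat.nth (· ∈ R) k) = (auxCount B R k).card := by
  classical
  have : (B ∩ R) ∩ Set.Iio (Nat.nth (· ∈ R) k) =
      (((auxCount B R k).image (Nat.nth (· ∈ R)) : Finset ℕ) : Set ℕ) := by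
    ext x
    simp only [auxCount, Set.mem_inter_iff, Set.mem_Iio, Finset.coe_image, Set.mem_image,
      Finset.mem_coe, Finset.mem_filter, Finset.mem_range]
    constructor
    · rintro ⟨⟨hB, hx⟩, hlt⟩
      have hn := Nat.nth_count (p := (· ∈ R)) hx
      refine ⟨Nat.count (· ∈ R) x, ⟨?_, ?_⟩, hn⟩
      · rw [← hn] at hlt
        exact (Nat.nth_lt_nth hR).1 hlt
      · rw [hn]; exact hB
    · rintro ⟨i, ⟨hi, hB⟩, rfl⟩
      exact ⟨⟨hB, Nat.nth_mem_of_infinite hR i⟩, (Nat.nth_lt_nth hR).2 hi⟩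
  unfold cnt
  rw [this, Nat.card_coe_set_eq, Set.ncard_coe_finset,
    Finset.card_image_of_injective _ (Nat.nth_injective (p := (· ∈ R)) hR)]

theorem cnt_nth (R : Set ℕ) (hR : R.Infinite) (k : ℕ) :
    cnt R (Nat.nth (· ∈ R) k) = k := by
  have := cnt_inter_nth Set.univ R hR k
  simpa [auxCount] using this

theorem auxCount_succ (B R : Set ℕ) (k : ℕ) :
    (auxCount B R k).card ≤ (auxCount B R (k+1)).card := by
  classical
  apply Finset.card_le_card
  intro i hi
  simp only [auxCount, Finset.mem_filter, Finset.mem_range] at *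
  exact ⟨by omega, hi.2⟩

theorem auxCount_pos (B R : Set ℕ) (n : ℕ) (h : ∀ x ∈ auxBlk R n, x ∈ B) :
    2^n ≤ (auxCount B R (2^(n+1) - 1)).card := by
  classical
  have : (Finset.Ico (2^n - 1) (2^(n+1) - 1)) ⊆ auxCount B R (2^(n+1) - 1) := by
    intro i hi
    have := h _ (Finset.mem_image_of_mem _ hi)
    simp only [auxCount, Finset.mem_filter, Finset.mem_range, Finset.mem_Ico] at *
    exact ⟨hi.2, this⟩
  have := Finset.card_le_card this
  rw [Nat.card_Ico, pow_succ] at this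
  have h2 : 0 < 2^n := by positivity
  rw [pow_succ]
  omega

theorem auxCount_neg (B R : Set ℕ) (n : ℕ) (h : ∀ x ∈ auxBlk R n, x ∉ B) :
    (auxCount B R (2^(n+1) - 1)).card ≤ 2^n - 1 := by
  classical
  have : auxCount B R (2^(n+1) - 1) ⊆ Finset.range (2^n - 1) := by
    intro i hi
    by_contra hc
    simp only [auxCount, Finset.mem_filter, Finset.mem_range] at hi hc
    exact h _ (Finset.mem_image_of_mem _ (Finset.mem_Ico.2 ⟨by omega, hi.1⟩)) hi.2
  simpa using Finset.card_le_card this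

theorem splits_bisects (B R : Set ℕ) (hR : R.Infinite) (h : SplitsBlocks B (auxBlk R)) :
    CofBisects B R := by
  unfold CofBisects
  rw [Set.infinite_iff_exists_gt]
  intro N
  obtain ⟨n, hn, hnN⟩ := h.1.exists_gt N
  obtain ⟨m, hm, hmn⟩ := h.2.exists_gt n
  have h1 := auxCount_pos B R n hn
  have h2 := auxCount_neg B R m hm
  have hp1 : 0 < 2^n := by positivity
  have hp2 : 0 < 2^m := by positivity
  have hle : 2^n ≤ 2^m := Nat.pow_le_pow_right (by norm_num) hmn.le
  have hN : n < 2^n := Nat.lt_two_pow_self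
  simp only [pow_succ] at h1 h2
  obtain ⟨k, hk, hk0⟩ := aux_ivt (fun k => 2 * ((auxCount B R k).card : ℤ) - k)
    (fun k => by
      have := auxCount_succ B R k
      push_cast
      omega) (2^n * 2 - 1) (2^m * 2 - 1) (by omega) (by omega) (by omega)
  refine ⟨Nat.nth (· ∈ R) k, ?_, ?_⟩
  · simp only [Set.mem_ofPred_eq]
    rw [cnt_inter_nth B R hR, cnt_nth R hR]
    have hk1 : (0:ℝ) < k := by exact_mod_cast (by omega : 0 < k)
    have : 2 * ((auxCount B R k).card : ℝ) = k := by
      have : 2 * (auxCount B R k).card = k := by omega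
      exact_mod_cast this
    field_simp
    linarith
  · have := (Nat.nth_strictMono (p := (· ∈ R)) hR).le_apply (x := k)
    omega

theorem frg_nonempty : ∃ ℱ : Set (ℕ → Finset ℕ), (∀ A ∈ ℱ, IsGoodBlockSeq A) ∧
    (¬ ∃ B : Set ℕ, ∀ A ∈ ℱ, SplitsBlocks B A) := by
  refine ⟨{A | IsGoodBlockSeq A}, fun A h => h, ?_⟩
  rintro ⟨B, hB⟩
  have key : ∀ C : Set ℕ, C.Infinite → ∀ n, ∀ x ∈ auxBlk C n, x ∈ C := by
    classical
    intro C hC n x hx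
    simp only [auxBlk, Finset.mem_image] at hx
    obtain ⟨i, _, rfl⟩ := hx
    exact Nat.nth_mem_of_infinite hC i
  have hne : ∀ C : Set ℕ, C.Infinite → ∀ n, ∃ x, x ∈ auxBlk C n :=
    fun C hC n => (auxBlk_good C hC).1.1 n
  by_cases hinf : B.Infinite
  · obtain ⟨n, hn⟩ := (hB _ (auxBlk_good B hinf)).2.nonempty
    obtain ⟨x, hx⟩ := hne B hinf n
    exact hn x hx (key B hinf n x hx)
  · have hc : Bᶜ.Infinite := (Set.not_infinite.1 hinf).infinite_compl
    obtain ⟨n, hn⟩ := (hB _ (auxBlk_good _ hc)).1.nonempty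
    obtain ⟨x, hx⟩ := hne _ hc n
    exact key _ hc n x hx (hn x hx)

theorem r_nonempty : ∃ ℛ : Set (Set ℕ), (∀ R ∈ ℛ, R.Infinite) ∧
    (¬ ∃ X : Set ℕ, X.Infinite ∧ ∀ R ∈ ℛ, CofBisects X R) := by
  refine ⟨{R | R.Infinite}, fun R h => h, ?_⟩
  rintro ⟨X, hX, h⟩
  obtain ⟨n, hn⟩ := (h X hX).nonempty
  simp only [Set.mem_ofPred_eq, Set.inter_self] at hn
  by_cases h0 : (cnt X n : ℝ) = 0
  · rw [h0] at hn; norm_num at hn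
  · rw [div_self h0] at hn; norm_num at hn

theorem splits_infinite (B R : Set ℕ) (hR : R.Infinite) (h : SplitsBlocks B (auxBlk R)) :
    B.Infinite := by
  classical
  rw [Set.infinite_iff_exists_gt]
  intro N
  obtain ⟨n, hn, hnN⟩ := h.1.exists_gt N
  have hN : n < 2^n := Nat.lt_two_pow_self
  have hm := hn _ (Finset.mem_image_of_mem (Nat.nth (· ∈ R))
    (Finset.mem_Ico.2 ⟨(by omega : 2^n - 1 ≤ 2^n), by rw [pow_succ]; omega⟩))
  refine ⟨_, hm, ?_⟩
  have := (Nat.nth_strictMono (p := (· ∈ R)) hR).le_apply (x := 2^n)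
  omega

/-- `𝔣𝔯 ≤ 𝔣𝔯_g ≤ 𝔯_{1/2}^∞`. -/
theorem fr_le_frg_le_rHalfInf : fr ≤ frg ∧ frg ≤ rHalfInf := by
  constructor
  · obtain ⟨F, h1, h2⟩ := frg_nonempty
    refine le_csInf ⟨_, F, h1, h2, rfl⟩ ?_
    rintro c ⟨G, hG, hG2, rfl⟩
    exact csInf_le' ⟨G, fun A hA => (hG A hA).1, hG2, rfl⟩
  · obtain ⟨F, h1, h2⟩ := r_nonempty
    refine le_csInf ⟨_, F, h1, h2, rfl⟩ ?_
    rintro c ⟨ℛ, hR, hR2, rfl⟩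
    refine le_trans (csInf_le' ⟨auxBlk '' ℛ, ?_, ?_, rfl⟩) Cardinal.mk_image_le
    · rintro _ ⟨R, hRm, rfl⟩
      exact auxBlk_good R (hR R hRm)
    · rintro ⟨B, hB⟩
      have hB' : ∀ R ∈ ℛ, SplitsBlocks B (auxBlk R) := fun R h => hB _ ⟨R, h, rfl⟩
      rcases ℛ.eq_empty_or_nonempty with rfl | ⟨R, hRm⟩
      · exact hR2 ⟨Set.univ, Set.infinite_univ, by simp⟩
      · exact hR2 ⟨B, splits_infinite B R (hR R hRm) (hB' R hRm),
          fun S hS => splits_bisects B S (hR S hS) (hB' S hS)⟩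
end

section
/- Let R, S ⊆ ℕ, let 0 < ε < 1, and let m ≤ l be natural numbers (with m ≥ 1) such that ε < |R ∩ {0,…,m−1}|/m < 1 − ε, ε < |S ∩ {0,…,m−1}|/m < 1 − ε, and ε < |S ∩ {0,…,l−1}|/l < 1 − ε. Then ε²/2 < |(R ∩ {0,…,m−1}) ∪ (S ∩ [m,l))| / l < 1 − ε²/2, where [m,l) = {m, m+1, …, l−1}. -/
open Set

/-- If `ε < |R ∩ m|/m < 1 − ε`, `ε < |S ∩ m|/m < 1 − ε` and `ε < |S ∩ l|/l < 1 − ε`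
for `1 ≤ m ≤ l` and `0 < ε < 1`, then
`ε²/2 < |(R ∩ m) ∪ (S ∩ [m,l))|/l < 1 − ε²/2`. -/
theorem three_times (R S : Set ℕ) (ε : ℝ) (hε0 : 0 < ε) (hε1 : ε < 1)
    (m l : ℕ) (hm : 1 ≤ m) (hml : m ≤ l)
    (hRm : ε < (cnt R m : ℝ) / m ∧ (cnt R m : ℝ) / m < 1 - ε)
    (hSm : ε < (cnt S m : ℝ) / m ∧ (cnt S m : ℝ) / m < 1 - ε)
    (hSl : ε < (cnt S l : ℝ) / l ∧ (cnt S l : ℝ) / l < 1 - ε) :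
    ε ^ 2 / 2 < (Nat.card ↥((R ∩ Set.Iio m) ∪ (S ∩ Set.Ico m l)) : ℝ) / l ∧
    (Nat.card ↥((R ∩ Set.Iio m) ∪ (S ∩ Set.Ico m l)) : ℝ) / l < 1 - ε ^ 2 / 2 := by
  have key : Nat.card ↥((R ∩ Set.Iio m) ∪ (S ∩ Set.Ico m l))
      = cnt R m + Nat.card ↥(S ∩ Set.Ico m l) := by
    unfold cnt
    simp only [Nat.card_coe_set_eq]
    apply Set.ncard_union_eq
    · rw [Set.disjoint_left]
      rintro x ⟨_, h1⟩ ⟨_, h2⟩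
      simp only [Set.mem_Iio, Set.mem_Ico] at h1 h2
      omega
    · exact (Set.finite_Iio m).subset Set.inter_subset_right
    · exact (Set.finite_Ico m l).subset Set.inter_subset_right
  have keyS : cnt S l = cnt S m + Nat.card ↥(S ∩ Set.Ico m l) := by
    unfold cnt
    simp only [Nat.card_coe_set_eq]
    rw [← Set.ncard_union_eq]
    · congr 1
      ext x
      simp only [Set.mem_inter_iff, Set.mem_union, Set.mem_Iio, Set.mem_Ico]
      constructor
      · rintro ⟨h1, h2⟩
        by_cases h : x < m
        · exact Or.inl ⟨h1, h⟩
        · exact Or.inr ⟨h1, by omega, h2⟩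
      · rintro (⟨h1, h2⟩ | ⟨h1, h2⟩)
        · exact ⟨h1, by omega⟩
        · exact ⟨h1, by omega⟩
    · rw [Set.disjoint_left]
      rintro x ⟨_, h1⟩ ⟨_, h2⟩
      simp only [Set.mem_Iio, Set.mem_Ico] at h1 h2
      omega
  have hd : Nat.card ↥(S ∩ Set.Ico m l) ≤ l - m := by
    rw [Nat.card_coe_set_eq]
    refine (Set.ncard_le_ncard Set.inter_subset_right (Set.finite_Ico m l)).trans ?_
    simp [Set.ncard_eq_toFinset_card']
  rw [key]
  generalize Nat.card ↥(S ∩ Set.Ico m l) = d at *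
  generalize cnt R m = r at *
  generalize cnt S m = s at *
  generalize cnt S l = t at *
  have hd' : (d : ℝ) + m ≤ l := by
    have : d + m ≤ l := by omega
    exact_mod_cast this
  have hts : (t : ℝ) = s + d := by exact_mod_cast keyS
  have hm0 : (0 : ℝ) < m := by exact_mod_cast hm
  have hl0 : (0 : ℝ) < l := by exact_mod_cast (lt_of_lt_of_le hm hml)
  have hd0 : (0 : ℝ) ≤ d := Nat.cast_nonneg d
  rw [lt_div_iff₀ hm0, div_lt_iff₀ hm0] at hRm hSm
  rw [lt_div_iff₀ hl0, div_lt_iff₀ hl0] at hSl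
  rw [lt_div_iff₀ hl0, div_lt_iff₀ hl0]
  obtain ⟨a1, a2⟩ := hRm
  obtain ⟨b1, b2⟩ := hSm
  obtain ⟨c1, c2⟩ := hSl
  push_cast
  have hεm : 0 < ε * m := mul_pos hε0 hm0
  have hεl : ε * (ε * l) ≤ 1 * (ε * l) :=
    mul_le_mul_of_nonneg_right hε1.le (mul_pos hε0 hl0).le
  rcases le_total (ε * l / 2) m with h | h
  · have h2 := mul_le_mul_of_nonneg_left h hε0.le
    constructor <;> nlinarith
  · constructor <;> nlinarith
end

section
/- Let ℬ = {B_0,…,B_{n−1}} be a finite *-independent family. Then for every rational number q with 0 < q < 1 there exists an infinite set X_q ⊆ ℕ such that X_q has asymptotic density d(X_q) = q and ℬ ∪ {X_q} is a *-independent family. -/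
open Filter Set

/-- The initial density `d_n(X) = |X ∩ {0,…,n−1}|/n`. -/
noncomputable def dens (X : Set ℕ) (n : ℕ) : ℝ := (cnt X n : ℝ) / n

/-- `X` is moderate: `0 < liminf d_n(X)` and `limsup d_n(X) < 1`. -/
def Moderate (X : Set ℕ) : Prop :=
  0 < Filter.liminf (fun n => dens X n) Filter.atTop ∧
    Filter.limsup (fun n => dens X n) Filter.atTop < 1

/-- A family `I` of infinite subsets of `ℕ` is `*`-independent if every member is
moderate and for every finite subfamily `F ⊆ I`,
`lim_{n→∞} d_n(⋂_{E∈F} E) / ∏_{E∈F} d_n(E) = 1`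
(the empty intersection being `ℕ`). -/
def StarIndep (I : Set (Set ℕ)) : Prop :=
  (∀ X ∈ I, X.Infinite ∧ Moderate X) ∧
  ∀ F : Finset (Set ℕ), ↑F ⊆ I →
    Filter.Tendsto (fun n => dens (⋂ E ∈ F, E) n / ∏ E ∈ F, dens E n)
      Filter.atTop (nhds 1)

/-- The ratio `d_l(⋂_{i∈E} B_i ∩ Y) / (∏_{i∈E} d_l(B_i) · d_l(Y))`. -/
noncomputable def ratio {n : ℕ} (B : Fin n → Set ℕ) (E : Finset (Fin n))
    (Y : Set ℕ) (l : ℕ) : ℝ :=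
  dens ((⋂ i ∈ E, B i) ∩ Y) l / ((∏ i ∈ E, dens (B i) l) * dens Y l)

open Classical in
lemma cnt_sum (Y : Set ℕ) (l : ℕ) :
    (cnt Y l : ℝ) = ∑ k ∈ Finset.range l, if k ∈ Y then (1 : ℝ) else 0 := by
  have : Y ∩ Set.Iio l = ((Finset.range l).filter (· ∈ Y) : Finset ℕ) := by
    ext k; simp [and_comm]
  unfold cnt
  rw [this, Nat.card_coe_set_eq, Set.ncard_coe_finset, Finset.sum_boole]

open Classical in
lemma exists_balanced {T : Type} [Fintype T] (c : ℕ → T) (q : ℝ) (h0 : 0 < q) (h1 : q < 1) :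
    ∃ X : Set ℕ, ∀ t l, |∑ k ∈ Finset.range l,
      (if c k = t then ((if k ∈ X then (1 : ℝ) else 0) - q) else 0)| ≤ 1 := by
  let r : T → ℕ → ℕ := fun t l => ((Finset.range l).filter (fun k => c k = t)).card
  have hr : ∀ t l, r t (l+1) = r t l + if c l = t then 1 else 0 := by
    intro t l
    simp only [r, Finset.range_add_one, Finset.filter_insert]
    split_ifs <;> simp
  obtain ⟨X, hXm⟩ : ∃ X : Set ℕ, ∀ k, k ∈ X ↔ ⌊q * (r (c k) k)⌋ < ⌊q * (r (c k) k + 1 : ℝ)⌋ :=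
    ⟨{k | ⌊q * (r (c k) k)⌋ < ⌊q * (r (c k) k + 1 : ℝ)⌋}, fun k => Iff.rfl⟩
  refine ⟨X, fun t l => ?_⟩
  have key : ∑ k ∈ Finset.range l,
      (if c k = t then ((if k ∈ X then (1 : ℝ) else 0) - q) else 0)
      = (⌊q * (r t l)⌋ : ℝ) - q * r t l := by
    induction l with
    | zero => simp [r]
    | succ l ih =>
      rw [Finset.sum_range_succ, ih, hr]
      by_cases hc : c l = t
      · simp only [hXm, hc, if_true, Nat.cast_add, Nat.cast_one]
        set a := q * (r t l : ℝ)
        have e : q * ((r t l : ℝ) + 1) = a + q := by simp only [a]; ring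
        rw [e]
        have l1 : ⌊a⌋ ≤ ⌊a + q⌋ := Int.floor_le_floor (by linarith)
        have l2 : ⌊a + q⌋ < ⌊a⌋ + 2 := by
          rw [Int.floor_lt]; push_cast
          linarith [Int.lt_floor_add_one a]
        split_ifs with h
        · have : ⌊a + q⌋ = ⌊a⌋ + 1 := by omega
          rw [this]; push_cast; ring
        · have : ⌊a + q⌋ = ⌊a⌋ := by omega
          rw [this]; ring
      · simp [hc]
  rw [key, abs_le]
  constructor
  · linarith [Int.lt_floor_add_one (q * (r t l : ℝ))]
  · linarith [Int.floor_le (q * (r t l : ℝ))]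

open Classical in
lemma exists_X (n : ℕ) (B : Fin n → Set ℕ) (q : ℝ) (h0 : 0 < q) (h1 : q < 1) :
    ∃ (X : Set ℕ) (M : ℝ), ∀ F : Finset (Set ℕ), (F : Set (Set ℕ)) ⊆ Set.range B → ∀ l,
      |dens ((⋂ E ∈ F, E) ∩ X) l - q * dens (⋂ E ∈ F, E) l| ≤ M / l := by
  let c : ℕ → Set (Fin n) := fun k => {i | k ∈ B i}
  obtain ⟨X, hX⟩ := exists_balanced c q h0 h1
  refine ⟨X, Fintype.card (Set (Fin n)), fun F hF l => ?_⟩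
  set A := ⋂ E ∈ F, E with hA
  let S : Finset (Set (Fin n)) := Finset.univ.filter (fun t => ∀ i, B i ∈ F → i ∈ t)
  have hS : ∀ k, k ∈ A ↔ c k ∈ S := by
    intro k
    simp only [hA, Set.mem_iInter, S, Finset.mem_filter, Finset.mem_univ, true_and, c, Set.mem_ofPred_eq]
    constructor
    · intro h i hi; exact h _ hi
    · intro h E hE
      obtain ⟨i, rfl⟩ := hF hE
      exact h i hE
  have hsum : (cnt (A ∩ X) l : ℝ) - q * cnt A l = ∑ t ∈ S, ∑ k ∈ Finset.range l,
      (if c k = t then ((if k ∈ X then (1 : ℝ) else 0) - q) else 0) := by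
    rw [Finset.sum_comm, cnt_sum, cnt_sum, Finset.mul_sum, ← Finset.sum_sub_distrib]
    refine Finset.sum_congr rfl fun k _ => ?_
    rw [Finset.sum_ite_eq]
    by_cases hk : k ∈ A
    · simp [hk, (hS k).1 hk]
    · have := (hS k).not.1 hk
      simp [hk, this]
  have hb : |(cnt (A ∩ X) l : ℝ) - q * cnt A l| ≤ Fintype.card (Set (Fin n)) := by
    rw [hsum]
    refine (Finset.abs_sum_le_sum_abs _ _).trans ?_
    refine (Finset.sum_le_sum fun t _ => hX t l).trans ?_
    simp only [Finset.sum_const, nsmul_eq_mul, mul_one]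
    exact_mod_cast Finset.card_le_univ S
  have : dens (A ∩ X) l - q * dens A l = ((cnt (A ∩ X) l : ℝ) - q * cnt A l) / l := by
    unfold dens; ring
  rw [this, abs_div, Nat.abs_cast]
  gcongr

lemma dens_nonneg' (X : Set ℕ) (l : ℕ) : 0 ≤ dens X l := by unfold dens; positivity

lemma moderate_lower {X : Set ℕ} (h : Moderate X) : ∃ c > 0, ∀ᶠ l in atTop, c ≤ dens X l := by
  obtain ⟨c, hc0, hc⟩ := exists_between h.1
  refine ⟨c, hc0, ?_⟩
  have := Filter.eventually_lt_of_lt_liminf hc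
    (isBoundedUnder_of ⟨0, fun l => dens_nonneg' X l⟩)
  exact this.mono fun _ h => h.le

lemma prod_lower (F : Finset (Set ℕ)) (h : ∀ X ∈ F, Moderate X) :
    ∃ c > 0, ∀ᶠ l in atTop, c ≤ ∏ E ∈ F, dens E l := by
  classical
  induction F using Finset.induction_on with
  | empty => exact ⟨1, one_pos, by simp⟩
  | insert a s ha ih =>
    obtain ⟨c, hc, h1⟩ := ih fun X hX => h X (Finset.mem_insert_of_mem hX)
    obtain ⟨d, hd, h2⟩ := moderate_lower (h a (Finset.mem_insert_self _ _))
    refine ⟨d * c, by positivity, ?_⟩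
    filter_upwards [h1, h2] with l h1 h2
    rw [Finset.prod_insert ha]
    exact mul_le_mul h2 h1 hc.le (dens_nonneg' _ _)

/-- For any finite `*`-independent family `ℬ = {B_0,…,B_{n−1}}` and any rational
`q` with `0 < q < 1`, there is an infinite set `X_q ⊆ ℕ` of asymptotic density
`q` such that `ℬ ∪ {X_q}` is a `*`-independent family. -/
theorem extend_star_independent (n : ℕ) (B : Fin n → Set ℕ)
    (hB : StarIndep (Set.range B)) (q : ℚ) (hq0 : 0 < q) (hq1 : q < 1) :
    ∃ X : Set ℕ, X.Infinite ∧
      Filter.Tendsto (fun l => dens X l) Filter.atTop (nhds (q : ℝ)) ∧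
      StarIndep (insert X (Set.range B)) := by
  classical
  have h0 : (0:ℝ) < q := by exact_mod_cast hq0
  have h1 : (q:ℝ) < 1 := by exact_mod_cast hq1
  obtain ⟨X, M, hX⟩ := exists_X n B q h0 h1
  have hM : Tendsto (fun l : ℕ => M / (l:ℝ)) atTop (nhds 0) :=
    tendsto_const_div_atTop_nhds_zero_nat M
  have hd : Tendsto (fun l => dens X l) atTop (nhds (q : ℝ)) := by
    rw [tendsto_iff_norm_sub_tendsto_zero]
    refine squeeze_zero' (Eventually.of_forall fun _ => norm_nonneg _) ?_ hM
    filter_upwards [eventually_gt_atTop 0] with l hl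
    have := hX ∅ (by simp) l
    have hu : dens Set.univ l = 1 := by
      have : (l:ℝ) ≠ 0 := by positivity
      simp [dens, cnt_sum, this]
    simpa [hu] using this
  have hinf : X.Infinite := by
    intro hfin
    have hz : Tendsto (fun l => dens X l) atTop (nhds 0) := by
      refine squeeze_zero (fun l => dens_nonneg' X l) (fun l => ?_)
        (tendsto_const_div_atTop_nhds_zero_nat (X.ncard : ℝ))
      unfold dens cnt
      rw [Nat.card_coe_set_eq]
      gcongr
      exact Set.inter_subset_left
    exact h0.ne (tendsto_nhds_unique hz hd)
  refine ⟨X, hinf, hd, ?_, ?_⟩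
  · intro Y hY
    rcases Set.mem_insert_iff.1 hY with rfl | hY
    · exact ⟨hinf, by rw [hd.liminf_eq]; exact h0, by rw [hd.limsup_eq]; exact h1⟩
    · exact hB.1 Y hY
  · intro F hF
    by_cases hXF : X ∈ F
    · obtain ⟨G, hXG, rfl⟩ : ∃ G, X ∉ G ∧ F = insert X G :=
        ⟨F.erase X, Finset.notMem_erase _ _, (Finset.insert_erase hXF).symm⟩
      have hG : (G : Set (Set ℕ)) ⊆ Set.range B := by
        intro E hE
        rcases hF (Finset.mem_coe.2 (Finset.mem_insert_of_mem hE)) with h | h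
        · exact absurd (h ▸ hE) hXG
        · exact h
      have hlim := hB.2 G hG
      obtain ⟨c, hc, hP⟩ := prod_lower G fun E hE => (hB.1 E (hG hE)).2
      have hi : (⋂ E ∈ insert X G, E) = (⋂ E ∈ G, E) ∩ X := by
        rw [Finset.set_biInter_insert, Set.inter_comm]
      rw [hi]
      simp only [Finset.prod_insert hXG]
      set A := ⋂ E ∈ G, E
      have herr : Tendsto (fun l => (dens (A ∩ X) l - q * dens A l) / ∏ E ∈ G, dens E l)
          atTop (nhds 0) := by
        rw [tendsto_zero_iff_norm_tendsto_zero]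
        have hM2 : Tendsto (fun l : ℕ => M / (l:ℝ) / c) atTop (nhds 0) := by
          simpa using hM.div_const c
        refine squeeze_zero' (Eventually.of_forall fun _ => norm_nonneg _) ?_ hM2
        filter_upwards [hP] with l hl
        rw [norm_div, Real.norm_eq_abs, Real.norm_eq_abs, abs_of_pos (hc.trans_le hl)]
        have := hX G hG l
        exact div_le_div₀ ((abs_nonneg _).trans this) this hc hl
      have h2 : Tendsto (fun l => ((dens (A ∩ X) l - q * dens A l) / (∏ E ∈ G, dens E l)
          + q * (dens A l / ∏ E ∈ G, dens E l)) / dens X l) atTop (nhds ((0 + q * 1) / q)) :=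
        (herr.add (hlim.const_mul _)).div hd h0.ne'
      have e : ((0 + q * 1) / q : ℝ) = 1 := by field_simp; ring
      rw [e] at h2
      refine h2.congr fun l => ?_
      rw [mul_comm (dens X l), ← div_div]
      congr 1
      ring
    · refine hB.2 F fun E hE => ?_
      rcases hF hE with h | h
      · exact absurd (h ▸ hE) hXF
      · exact h
end
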